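/- arXiv:2410.18422 — 2 statements merged into one kernel-verified Lean document; each statement's English description precedes it below -/
import Mathlib

section
/- Let Ω⁺ ⊂ ℝ² be a Jordan domain, Ω⁻ = ℝ² \ closure(Ω⁺), and Γ = ∂Ω⁺ = ∂Ω⁻. Fix α ∈ (0,1) and C₀ > 0, and suppose there exists r₀ > 0 such that the Carleson ε-function satisfies ε(x,r) ≤ C₀·r^α for all x ∈ Γ and all 0 < r ≤ r₀. Then Γ is a C^{1,β} submanifold of dimension 1 in ℝ² with β = α/16; that is, every point of Γ has a neighborhood in which, after a rotation and translation, Γ coincides with the graph of a continuously differentiable function whose derivative is Hölder continuous with exponent α/16. -/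
open Set Metric MeasureTheory

noncomputable section

abbrev E2 := EuclideanSpace ℝ (Fin 2)

/-- The point on the circle of center `x` and radius `r` at angle `t`. -/
def circlePt (x : E2) (r t : ℝ) : E2 :=
  x + r • (EuclideanSpace.equiv (Fin 2) ℝ).symm ![Real.cos t, Real.sin t]

/-- `A` is an open arc of the circle `∂B(x,r)`. -/
def IsOpenArc (x : E2) (r : ℝ) (A : Set E2) : Prop :=
  ∃ a b : ℝ, a < b ∧ b - a ≤ 2 * Real.pi ∧ A = circlePt x r '' Set.Ioo a b

/-- The `H¹`-measure of the largest open arc of `∂B(x,r)` contained in `Ω`. -/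
def maxArcMeasure (Ω : Set E2) (x : E2) (r : ℝ) : ℝ :=
  (⨆ A ∈ {A | IsOpenArc x r A ∧ A ⊆ Ω}, μH[1] A).toReal

/-- The Carleson ε-function of the Jordan domain `Ω⁺`, where `Ω⁻ = ℝ² \ closure Ω⁺`. -/
def carlesonEps (Ω : Set E2) (x : E2) (r : ℝ) : ℝ :=
  (1 / r) * max |Real.pi * r - maxArcMeasure Ω x r|
      |Real.pi * r - maxArcMeasure ((closure Ω)ᶜ) x r|

/-- `Γ` is a Jordan curve: the image of a continuous injective map of the unit circle. -/
def IsJordanCurve (Γ : Set E2) : Prop :=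
  ∃ f : Metric.sphere (0 : ℝ × ℝ) 1 → E2,
    Continuous f ∧ Function.Injective f ∧ Set.range f = Γ

/-- A Jordan domain: an open connected set whose boundary is a Jordan curve. -/
def IsJordanDomain (Ω : Set E2) : Prop :=
  IsOpen Ω ∧ IsConnected Ω ∧ IsJordanCurve (frontier Ω)

/-- An affine line in the plane. -/
def IsAffineLine (L : Set E2) : Prop :=
  ∃ p v : E2, v ≠ 0 ∧ L = {y | ∃ t : ℝ, y = p + t • v}

/-- The (smaller) angle between the lines spanned by `u` and `v`, an element of `[0, π/2]`. -/
def lineAngle (u v : E2) : ℝ :=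
  min (InnerProductGeometry.angle u v) (Real.pi - InnerProductGeometry.angle u v)



/-- cross product of two complex numbers -/
def cr (u v : ℂ) : ℝ := u.re * v.im - u.im * v.re
/-- real inner product of two complex numbers -/
def ip (u v : ℂ) : ℝ := u.re * v.re + u.im * v.im

lemma sqle {a b : ℝ} (h : a ^ 2 ≤ b ^ 2) (hb : 0 ≤ b) : a ≤ b :=
  le_trans (le_abs_self a) (abs_le_of_sq_le_sq h hb)

lemma nsq (u : ℂ) : ‖u‖ ^ 2 = u.re ^ 2 + u.im ^ 2 := by
  rw [Complex.sq_norm, Complex.normSq_apply]; ring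

lemma cr_ip (u v : ℂ) : cr u v ^ 2 + ip u v ^ 2 = ‖u‖ ^ 2 * ‖v‖ ^ 2 := by
  rw [nsq, nsq, cr, ip]; ring

lemma abs_cr_le (u v : ℂ) : |cr u v| ≤ ‖u‖ * ‖v‖ := by
  apply abs_le_of_sq_le_sq _ (by positivity)
  nlinarith [cr_ip u v, sq_nonneg (ip u v)]

lemma abs_ip_le (u v : ℂ) : |ip u v| ≤ ‖u‖ * ‖v‖ := by
  apply abs_le_of_sq_le_sq _ (by positivity)
  nlinarith [cr_ip u v, sq_nonneg (cr u v)]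

lemma cr_tri (u v w : ℂ) : ‖v‖ * |cr u w| ≤ ‖u‖ * |cr v w| + ‖w‖ * |cr u v| := by
  have e : (cr u w : ℂ) * v = (cr v w : ℂ) * u + (cr u v : ℂ) * w := by
    apply Complex.ext <;> simp [cr] <;> ring
  have h := norm_add_le ((cr v w : ℂ) * u) ((cr u v : ℂ) * w)
  rw [← e] at h
  simp only [norm_mul, Complex.norm_real, Real.norm_eq_abs] at h
  linarith

structure Adm (P M : Set ℂ) (K α r₁ : ℝ) : Prop where
  oP : IsOpen P
  oM : IsOpen M
  disj : Disjoint P M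
  Kpos : 0 < K
  αpos : 0 < α
  αlt : α < 1
  rpos : 0 < r₁
  rle : r₁ ≤ 1
  small : K * r₁ ^ α ≤ 1 / 1000
  arc : ∀ x, x ∉ P ∪ M → ∀ r, 0 < r → r ≤ r₁ → ∃ n : ℂ, ‖n‖ = 1 ∧ ∀ v, ‖v‖ = r →
    (K * r ^ α * r < ip v n → x + v ∈ P) ∧ (ip v n < -(K * r ^ α * r) → x + v ∈ M)

namespace Adm
variable {P M : Set ℂ} {K α r₁ : ℝ}

lemma sm (h : Adm P M K α r₁) {r : ℝ} (hr : 0 ≤ r) (hr1 : r ≤ r₁) : K * r ^ α ≤ 1 / 1000 := by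
  have := Real.rpow_le_rpow hr hr1 h.αpos.le
  have := mul_le_mul_of_nonneg_left this h.Kpos.le
  linarith [h.small]

lemma mono (h : Adm P M K α r₁) {r s : ℝ} (hr : 0 ≤ r) (hr1 : r ≤ s) : K * r ^ α ≤ K * s ^ α :=
  mul_le_mul_of_nonneg_left (Real.rpow_le_rpow hr hr1 h.αpos.le) h.Kpos.le

lemma Kn (h : Adm P M K α r₁) {r : ℝ} (hr : 0 ≤ r) : 0 ≤ K * r ^ α :=
  mul_nonneg h.Kpos.le (Real.rpow_nonneg hr _)

lemma closedG (h : Adm P M K α r₁) : IsClosed {x | x ∉ P ∪ M} :=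
  (h.oP.union h.oM).isClosed_compl

lemma cross (h : Adm P M K α r₁) {S : Set ℂ} (hS : IsPreconnected S) (h1 : (S ∩ P).Nonempty)
    (h2 : (S ∩ M).Nonempty) : ∃ z ∈ S, z ∉ P ∪ M := by
  by_contra hc
  push Not at hc
  obtain ⟨z, -, hz, hz'⟩ := hS P M h.oP h.oM hc h1 h2
  exact h.disj.le_bot ⟨hz, hz'⟩

lemma arc' (h : Adm P M K α r₁) {x : ℂ} (hx : x ∉ P ∪ M) {r : ℝ} (hr : 0 < r) (hr1 : r ≤ r₁) :
    ∃ n : ℂ, ‖n‖ = 1 ∧ (∀ v, ‖v‖ = r →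
    (K * r ^ α * r < ip v n → x + v ∈ P) ∧ (ip v n < -(K * r ^ α * r) → x + v ∈ M)) ∧
    ∀ v, ‖v‖ = r → x + v ∉ P ∪ M → |ip v n| ≤ K * r ^ α * r := by
  obtain ⟨n, hn, ha⟩ := h.arc x hx r hr hr1
  refine ⟨n, hn, ha, fun v hv hvG => ?_⟩
  rw [abs_le]
  constructor
  · by_contra hc
    exact hvG (Or.inr ((ha v hv).2 (not_le.1 hc)))
  · by_contra hc
    exact hvG (Or.inl ((ha v hv).1 (not_le.1 hc)))

lemma pair (h : Adm P M K α r₁) {x y z : ℂ} (hx : x ∉ P ∪ M) (hy : y ∉ P ∪ M) (hz : z ∉ P ∪ M)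
    {r : ℝ} (hr : 0 < r) (hr1 : r ≤ r₁) (hyx : ‖y - x‖ = r) (hzx : ‖z - x‖ = r) :
    |cr (y - x) (z - x)| ≤ 2 * (K * r ^ α) * r ^ 2 := by
  obtain ⟨n, hn, -, hG⟩ := h.arc' hx hr hr1
  have h1 := hG (y - x) hyx (by simpa using hy)
  have h2 := hG (z - x) hzx (by simpa using hz)
  have b1 := abs_cr_le n (y - x)
  have b2 := abs_cr_le n (z - x)
  rw [hn, hyx, one_mul] at b1
  rw [hn, hzx, one_mul] at b2
  have hk := h.Kn hr.le
  have n1 := nsq n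
  rw [hn] at n1
  set v := y - x
  set w := z - x
  have e : cr v w = ip v n * cr n w - cr n v * ip w n := by
    have : cr v w = cr v w * (n.re ^ 2 + n.im ^ 2) := by rw [← n1]; ring
    rw [this]; simp only [cr, ip]; ring
  rw [e]
  calc |ip v n * cr n w - cr n v * ip w n| ≤ |ip v n * cr n w| + |cr n v * ip w n| := abs_sub _ _
    _ = |ip v n| * |cr n w| + |cr n v| * |ip w n| := by rw [abs_mul, abs_mul]
    _ ≤ (K * r ^ α * r) * r + r * (K * r ^ α * r) := by gcongr
    _ = _ := by ring

set_option maxHeartbeats 1000000 in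
lemma mid (h : Adm P M K α r₁) {x y : ℂ} (hx : x ∉ P ∪ M) (hy : y ∉ P ∪ M)
    {r : ℝ} (hr : 0 < r) (hr1 : r ≤ r₁) (hyx : ‖y - x‖ ≤ r) :
    ∃ z, z ∉ P ∪ M ∧ ‖z - (x + y) / 2‖ ≤ 2 * (K * r ^ α) * r := by
  have hk := h.Kn hr.le
  by_cases hxy : y = x
  · refine ⟨x, hx, ?_⟩
    subst hxy
    have : y - (y + y) / 2 = 0 := by ring
    rw [this, norm_zero]; positivity
  set s := ‖y - x‖ with hs
  have hs0 : 0 < s := norm_pos_iff.2 (sub_ne_zero.2 hxy)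
  obtain ⟨n, hn, ha, hG⟩ := h.arc' hx hs0 (hyx.trans hr1)
  set v := y - x with hv
  have ga := hG v rfl (by simpa [hv] using hy)
  have sm := h.sm hs0.le (hyx.trans hr1)
  have hks := h.Kn hs0.le
  have hD : K * s ^ α * s ≤ s / 1000 := by nlinarith
  have ci := cr_ip n v
  have hcomm : ip n v = ip v n := by simp [ip]; ring
  rw [hn, hcomm, ← hs] at ci
  set a := ip v n
  set b := cr n v with hb
  have ha1 : |a| ≤ s / 1000 := ga.trans hD
  have hq : √3 ^ 2 = 3 := Real.sq_sqrt (by norm_num)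
  have hq0 : 0 ≤ √3 := Real.sqrt_nonneg 3
  have hq1 : (1.7:ℝ) ≤ √3 := by nlinarith
  let p : ℝ → ℂ := fun t => v / 2 + t * (Complex.I * v)
  have np : ∀ t : ℝ, ‖p t‖ ^ 2 = (1 / 4 + t ^ 2) * s ^ 2 := by
    intro t
    rw [hs, nsq, nsq]; simp [p]; ring
  have ipp : ∀ t : ℝ, ip (p t) n = a / 2 - t * b := by
    intro t; simp [p, a, hb, ip, cr]; ring
  have np1 : ‖p (√3 / 2)‖ = s := by
    have := np (√3 / 2)
    rw [div_pow, hq] at this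
    nlinarith [norm_nonneg (p (√3 / 2))]
  have np2 : ‖p (-(√3 / 2))‖ = s := by
    have := np (-(√3 / 2))
    rw [neg_sq, div_pow, hq] at this
    nlinarith [norm_nonneg (p (-(√3 / 2)))]
  have hcont : Continuous fun t => x + p t := by fun_prop
  have hS : IsPreconnected ((fun t => x + p t) '' Icc (-(√3 / 2)) (√3 / 2)) :=
    isPreconnected_Icc.image _ hcont.continuousOn
  have hle : -(√3 / 2) ≤ √3 / 2 := by linarith
  have m1 : x + p (√3 / 2) ∈ ((fun t => x + p t) '' Icc (-(√3 / 2)) (√3 / 2)) :=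
    ⟨_, right_mem_Icc.2 hle, rfl⟩
  have m2 : x + p (-(√3 / 2)) ∈ ((fun t => x + p t) '' Icc (-(√3 / 2)) (√3 / 2)) :=
    ⟨_, left_mem_Icc.2 hle, rfl⟩
  have habs := abs_le.1 ha1
  have hbb : (0.9 * s) ^ 2 ≤ b ^ 2 := by nlinarith
  have hex : ∃ z ∈ ((fun t => x + p t) '' Icc (-(√3 / 2)) (√3 / 2)), z ∉ P ∪ M := by
    rcases le_total 0 b with hb0 | hb0
    · have : 0.9 * s ≤ b := sqle hbb hb0
      apply h.cross hS ⟨_, m2, (ha _ np2).1 _⟩ ⟨_, m1, (ha _ np1).2 _⟩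
      · rw [ipp]; nlinarith
      · rw [ipp]; nlinarith
    · have : 0.9 * s ≤ -b := sqle (by rw [neg_sq]; exact hbb) (by linarith)
      apply h.cross hS ⟨_, m1, (ha _ np1).1 _⟩ ⟨_, m2, (ha _ np2).2 _⟩
      · rw [ipp]; nlinarith
      · rw [ipp]; nlinarith
  obtain ⟨z, ⟨t, ht, rfl⟩, hz⟩ := hex
  simp only at hz
  refine ⟨x + p t, hz, ?_⟩
  have hρ0 : 0 < ‖p t‖ := by
    by_contra hc
    have : ‖p t‖ = 0 := le_antisymm (not_lt.1 hc) (norm_nonneg _)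
    have := np t
    nlinarith [sq_nonneg t, sq_pos_of_pos hs0]
  have ht2 : t ^ 2 ≤ 3 / 4 := by nlinarith [ht.1, ht.2]
  have hρs : ‖p t‖ ≤ s := by
    apply sqle _ hs0.le
    rw [np]; nlinarith [sq_nonneg s]
  have e1 : ‖x - (x + p t)‖ = ‖p t‖ := by rw [← norm_neg]; congr 1; ring
  have e2 : ‖y - (x + p t)‖ = ‖p t‖ := by
    rw [← sq_eq_sq₀ (norm_nonneg _) (norm_nonneg _), np, hs, nsq, nsq]
    simp [p, hv]; ring
  have hp := h.pair hz hx hy hρ0 (hρs.trans (hyx.trans hr1)) e1 e2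
  have e3 : cr (x - (x + p t)) (y - (x + p t)) = t * s ^ 2 := by
    rw [hs, nsq]; simp [p, hv, cr]; ring
  rw [e3, abs_mul, abs_of_nonneg (sq_nonneg s)] at hp
  have hmm := h.mono hρ0.le hρs
  have : |t| * s ^ 2 ≤ 2 * (K * s ^ α) * s ^ 2 := by
    refine hp.trans ?_
    gcongr
  have ht' : |t| ≤ 2 * (K * s ^ α) := le_of_mul_le_mul_right this (by positivity)
  have e4 : x + p t - (x + y) / 2 = t * (Complex.I * v) := by simp [p, hv]; ring
  rw [e4, norm_mul, norm_mul, Complex.norm_I, one_mul, Complex.norm_real, Real.norm_eq_abs, ← hs]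
  have hmm := h.mono hs0.le hyx
  calc |t| * s ≤ (2 * (K * s ^ α)) * s := by gcongr
    _ ≤ _ := by gcongr

end Adm
namespace Adm
variable {P M : Set ℂ} {K α r₁ : ℝ}

lemma bis (h : Adm P M K α r₁) (f : ℂ → ℝ) (c : ℝ) (n : ℕ) : ∀ (x y : ℂ), x ∉ P ∪ M → y ∉ P ∪ M →
    ∀ r : ℝ, 0 < r → r ≤ r₁ → ‖y - x‖ ≤ r → f x ≤ c → c ≤ f y →
    ∃ x' y' : ℂ, x' ∉ P ∪ M ∧ y' ∉ P ∪ M ∧ ‖y' - x'‖ ≤ (2 / 3) ^ n * r ∧ f x' ≤ c ∧ c ≤ f y' ∧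
      ∃ τ ∈ Icc (0 : ℝ) 1, ‖x' - (x + τ * (y - x))‖ ≤ 6 * (K * r ^ α) * r := by
  induction n with
  | zero =>
    intro x y hx hy r hr hr1 hxy h1 h2
    have hk := h.Kn hr.le
    refine ⟨x, y, hx, hy, by simpa using hxy, h1, h2, 0, by simp, ?_⟩
    simp; positivity
  | succ n ih =>
    intro x y hx hy r hr hr1 hxy h1 h2
    have hk := h.Kn hr.le
    have sm := h.sm hr.le hr1
    obtain ⟨z, hz, hzm⟩ := h.mid hx hy hr hr1 hxy
    set e := z - (x + y) / 2 with he
    have hz' : z = e + (x + y) / 2 := by rw [he]; ring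
    have he' : ‖e‖ ≤ r / 6 := hzm.trans (by nlinarith)
    have hr' : 0 < 2 / 3 * r := by positivity
    have hm := h.mono hr'.le (by linarith : 2 / 3 * r ≤ r)
    have hk' := h.Kn hr'.le
    have hE : 6 * (K * (2 / 3 * r) ^ α) * (2 / 3 * r) ≤ 4 * (K * r ^ α) * r := by nlinarith
    have hhalf : ‖(y - x) / 2‖ ≤ r / 2 := by
      rw [norm_div]; simp; linarith
    rcases le_total (f z) c with hc | hc
    · have d : ‖y - z‖ ≤ 2 / 3 * r := by
        have : y - z = (y - x) / 2 - e := by rw [he]; ring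
        rw [this]
        linarith [norm_sub_le ((y - x) / 2) e]
      obtain ⟨x', y', i1, i2, i3, i4, i5, τ, hτ, i6⟩ :=
        ih z y hz hy (2 / 3 * r) hr' (by linarith) d hc h2
      refine ⟨x', y', i1, i2, by rw [pow_succ, mul_assoc]; exact i3, i4, i5, 1 / 2 + τ / 2,
        ⟨by linarith [hτ.1], by linarith [hτ.2]⟩, ?_⟩
      have : x' - (x + ((1 / 2 + τ / 2 : ℝ) : ℂ) * (y - x)) =
          (x' - (z + τ * (y - z))) + ((1 - τ : ℝ) : ℂ) * e := by
        rw [he]; push_cast; ring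
      rw [this]
      refine (norm_add_le _ _).trans ?_
      rw [norm_mul, Complex.norm_real, Real.norm_eq_abs, abs_of_nonneg (by linarith [hτ.2])]
      nlinarith [norm_nonneg e, hτ.1]
    · have d : ‖z - x‖ ≤ 2 / 3 * r := by
        have : z - x = (y - x) / 2 + e := by rw [he]; ring
        rw [this]
        linarith [norm_add_le ((y - x) / 2) e]
      obtain ⟨x', y', i1, i2, i3, i4, i5, τ, hτ, i6⟩ :=
        ih x z hx hz (2 / 3 * r) hr' (by linarith) d h1 hc
      refine ⟨x', y', i1, i2, by rw [pow_succ, mul_assoc]; exact i3, i4, i5, τ / 2,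
        ⟨by linarith [hτ.1], by linarith [hτ.2]⟩, ?_⟩
      have : x' - (x + ((τ / 2 : ℝ) : ℂ) * (y - x)) =
          (x' - (x + τ * (z - x))) + (τ : ℂ) * e := by
        rw [he]; push_cast; ring
      rw [this]
      refine (norm_add_le _ _).trans ?_
      rw [norm_mul, Complex.norm_real, Real.norm_eq_abs, abs_of_nonneg hτ.1]
      nlinarith [norm_nonneg e, hτ.2]

lemma ivt (h : Adm P M K α r₁) {f : ℂ → ℝ} (hf : Continuous f) {c : ℝ} {x y : ℂ} (hx : x ∉ P ∪ M)
    (hy : y ∉ P ∪ M) {r : ℝ} (hr : 0 < r) (hr1 : r ≤ r₁) (hyx : ‖y - x‖ ≤ r) (h1 : f x ≤ c)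
    (h2 : c ≤ f y) :
    ∃ q : ℂ, q ∉ P ∪ M ∧ f q = c ∧
      ∃ τ ∈ Icc (0 : ℝ) 1, ‖q - (x + τ * (y - x))‖ ≤ 6 * (K * r ^ α) * r := by
  choose X Y g1 g2 g3 g4 g5 T hT g6 using fun n => h.bis f c n x y hx hy r hr hr1 hyx h1 h2
  have sm := h.sm hr.le hr1
  have hk := h.Kn hr.le
  have hb : ∀ n, (X n, T n) ∈ closedBall x (2 * r) ×ˢ Icc (0 : ℝ) 1 := by
    intro n
    refine ⟨?_, hT n⟩
    rw [mem_closedBall, dist_eq_norm]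
    have : X n - x = (X n - (x + T n * (y - x))) + T n * (y - x) := by ring
    rw [this]
    refine (norm_add_le _ _).trans ?_
    rw [norm_mul, Complex.norm_real, Real.norm_eq_abs, abs_of_nonneg (hT n).1]
    have a1 := g6 n
    have a2 := (hT n).2
    have a3 := (hT n).1
    nlinarith [norm_nonneg (y - x)]
  obtain ⟨⟨q, τ⟩, hq, φ, hφ, hlim⟩ :=
    ((isCompact_closedBall x (2 * r)).prod isCompact_Icc).tendsto_subseq hb
  have l1 : Filter.Tendsto (fun n => X (φ n)) Filter.atTop (nhds q) :=
    (continuous_fst.tendsto _).comp hlim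
  have l2 : Filter.Tendsto (fun n => T (φ n)) Filter.atTop (nhds τ) :=
    (continuous_snd.tendsto _).comp hlim
  have l3 : Filter.Tendsto (fun n => Y (φ n) - X (φ n)) Filter.atTop (nhds 0) := by
    have l0 : Filter.Tendsto (fun n : ℕ => (2 / 3 : ℝ) ^ n * r) Filter.atTop (nhds 0) := by
      have := (tendsto_pow_atTop_nhds_zero_of_lt_one (r := (2 / 3 : ℝ)) (by norm_num)
        (by norm_num)).mul_const r
      simpa using this
    exact squeeze_zero_norm (fun n => g3 (φ n)) (l0.comp hφ.tendsto_atTop)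
  have l4 : Filter.Tendsto (fun n => Y (φ n)) Filter.atTop (nhds q) := by
    have := l3.add l1
    simpa using this
  refine ⟨q, h.closedG.mem_of_tendsto l1 (Filter.Eventually.of_forall fun n => g1 (φ n)),
    le_antisymm ?_ ?_, τ, hq.2, ?_⟩
  · exact le_of_tendsto ((hf.tendsto q).comp l1) (Filter.Eventually.of_forall fun n => g4 (φ n))
  · exact ge_of_tendsto ((hf.tendsto q).comp l4) (Filter.Eventually.of_forall fun n => g5 (φ n))
  · have l5 : Filter.Tendsto (fun n => ‖X (φ n) - (x + (T (φ n) : ℂ) * (y - x))‖) Filter.atTop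
        (nhds ‖q - (x + τ * (y - x))‖) := by
      apply Filter.Tendsto.norm
      apply l1.sub
      apply tendsto_const_nhds.add
      apply Filter.Tendsto.mul_const
      exact (Complex.continuous_ofReal.tendsto _).comp l2
    exact le_of_tendsto l5 (Filter.Eventually.of_forall fun n => g6 (φ n))

lemma flat (h : Adm P M K α r₁) {x p w : ℂ} (hx : x ∉ P ∪ M) (hp : p ∉ P ∪ M) (hw : w ∉ P ∪ M)
    {r : ℝ} (hr : 0 < r) (hr1 : r ≤ r₁) (hpx : ‖p - x‖ = r) (hwx : ‖w - x‖ ≤ r) :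
    |cr (w - x) (p - x)| ≤ 8 * (K * r ^ α) * r ^ 2 := by
  have hk := h.Kn hr.le
  by_cases hwx0 : w = x
  · subst hwx0
    simp [cr]; positivity
  set s := ‖w - x‖ with hs
  have hs0 : 0 < s := norm_pos_iff.2 (sub_ne_zero.2 hwx0)
  obtain ⟨q, hq, hfq, τ, hτ, he⟩ := h.ivt (f := fun z => ‖z - x‖) (c := s) (by fun_prop) hx hp hr hr1
    hpx.le (by simp; exact hs0.le) (by rw [hpx]; exact hwx)
  have c1 := h.pair hx hw hq hs0 (hwx.trans hr1) hs.symm hfq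
  have e1 : cr (q - x) (p - x) = cr (q - (x + τ * (p - x))) (p - x) := by
    simp [cr]; ring
  have c2 : |cr (q - x) (p - x)| ≤ 6 * (K * r ^ α) * r * r := by
    rw [e1]
    refine (abs_cr_le _ _).trans ?_
    rw [hpx]
    gcongr
  have c3 := cr_tri (w - x) (q - x) (p - x)
  rw [hfq, hpx, ← hs] at c3
  have hm := h.mono hs0.le hwx
  have hks := h.Kn hs0.le
  have c4 : r * |cr (w - x) (q - x)| ≤ s * (2 * (K * r ^ α) * r ^ 2) := by
    calc r * |cr (w - x) (q - x)| ≤ r * (2 * (K * s ^ α) * s ^ 2) := by gcongr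
      _ = s * (2 * (K * s ^ α) * (r * s)) := by ring
      _ ≤ s * (2 * (K * r ^ α) * (r * r)) := by gcongr
      _ = _ := by ring
  have : s * |cr (w - x) (p - x)| ≤ s * (8 * (K * r ^ α) * r ^ 2) := by
    nlinarith
  exact le_of_mul_le_mul_left this hs0

/-- existence of boundary points on every small circle -/
lemma exist (h : Adm P M K α r₁) {x : ℂ} (hx : x ∉ P ∪ M) {r : ℝ} (hr : 0 < r) (hr1 : r ≤ r₁) :
    ∃ p, p ∉ P ∪ M ∧ ‖p - x‖ = r := by
  obtain ⟨n, hn, ha⟩ := h.arc x hx r hr hr1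
  have sm := h.sm hr.le hr1
  have n1 := nsq n
  rw [hn] at n1
  have hconn : IsPreconnected (sphere x r) :=
    isPreconnected_sphere (by rw [Complex.rank_real_complex]; norm_num) x r
  have k1 : ‖(r : ℂ) * n‖ = r := by rw [norm_mul, hn]; simp [hr.le]
  have k2 : ‖-((r : ℂ) * n)‖ = r := by rw [norm_neg, k1]
  have i1 : ip ((r : ℂ) * n) n = r := by
    have : ip ((r : ℂ) * n) n = r * (n.re ^ 2 + n.im ^ 2) := by simp [ip]; ring
    rw [this, ← n1]; ring
  have i2 : ip (-((r : ℂ) * n)) n = -r := by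
    have : ip (-((r : ℂ) * n)) n = -ip ((r : ℂ) * n) n := by simp [ip]; ring
    rw [this, i1]
  obtain ⟨z, hz, hzG⟩ := h.cross hconn ⟨x + r * n, by simp [hn, hr.le], (ha _ k1).1 (by rw [i1]; nlinarith)⟩
    ⟨x + -(r * n), by simp [hn, hr.le], (ha _ k2).2 (by rw [i2]; nlinarith)⟩
  exact ⟨z, hzG, by rwa [mem_sphere, dist_eq_norm] at hz⟩

lemma flat2aux (h : Adm P M K α r₁) {B : ℝ} (hB : 16 * K / (1 - 2⁻¹ ^ α) = B) {x w : ℂ}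
    (hx : x ∉ P ∪ M) (hw : w ∉ P ∪ M) (n : ℕ) : ∀ (p : ℂ), p ∉ P ∪ M → ∀ r, 0 < r → r ≤ r₁ →
    ‖p - x‖ = r → ‖w - x‖ ≤ r → 2⁻¹ ^ n * r ≤ ‖w - x‖ →
    |cr (w - x) (p - x)| ≤ B * r ^ α * (‖w - x‖ * r) := by
  have hα := h.αpos
  have hK := h.Kpos
  have q0 : (0 : ℝ) < 2⁻¹ ^ α := by positivity
  have q1 : (2⁻¹ : ℝ) ^ α < 1 := Real.rpow_lt_one (by norm_num) (by norm_num) hα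
  have hB0 : 0 < B := by rw [← hB]; apply div_pos (by positivity) (by linarith)
  have hBe : 16 * K + B * 2⁻¹ ^ α = B := by
    have : B * (1 - 2⁻¹ ^ α) = 16 * K := by rw [← hB]; field_simp [(by linarith : (1 : ℝ) - 2⁻¹ ^ α ≠ 0)]
    linarith
  induction n with
  | zero =>
    intro p hp r hr hr1 hpx hwx hn
    have hw' : ‖w - x‖ = r := le_antisymm hwx (by simpa using hn)
    have := h.flat hx hp hw hr hr1 hpx hwx
    rw [hw']
    refine this.trans ?_
    have hra : 0 ≤ r ^ α := by positivity
    have : 8 * K ≤ B := by nlinarith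
    calc 8 * (K * r ^ α) * r ^ 2 = (8 * K) * r ^ α * (r * r) := by ring
      _ ≤ _ := by gcongr
  | succ n ih =>
    intro p hp r hr hr1 hpx hwx hn
    have hra : 0 ≤ r ^ α := by positivity
    rcases le_or_gt (r / 2) ‖w - x‖ with hc | hc
    · have := h.flat hx hp hw hr hr1 hpx hwx
      refine this.trans ?_
      have : 16 * K ≤ B := by nlinarith
      calc 8 * (K * r ^ α) * r ^ 2 = (16 * K) * r ^ α * (r / 2 * r) := by ring
        _ ≤ _ := by gcongr
    · have hr2 : 0 < r / 2 := by positivity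
      obtain ⟨p', hp', hpx'⟩ := h.exist hx hr2 (by linarith)
      have i1 := ih p' hp' (r / 2) hr2 (by linarith) hpx' hc.le (by
        rw [pow_succ] at hn; linarith)
      have i2 := h.flat hx hp hp' hr hr1 hpx (by rw [hpx']; linarith)
      have i3 := cr_tri (w - x) (p' - x) (p - x)
      rw [hpx', hpx] at i3
      have e : (r / 2) ^ α = 2⁻¹ ^ α * r ^ α := by
        rw [← Real.mul_rpow (by norm_num) hr.le]; congr 1; ring
      rw [e] at i1
      have hw0 := norm_nonneg (w - x)
      have : (r / 2) * |cr (w - x) (p - x)| ≤ (r / 2) * (B * r ^ α * (‖w - x‖ * r)) := by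
        refine i3.trans ?_
        calc ‖w - x‖ * |cr (p' - x) (p - x)| + r * |cr (w - x) (p' - x)|
            ≤ ‖w - x‖ * (8 * (K * r ^ α) * r ^ 2)
              + r * (B * (2⁻¹ ^ α * r ^ α) * (‖w - x‖ * (r / 2))) := by gcongr
          _ = (r / 2) * ((16 * K + B * 2⁻¹ ^ α) * r ^ α * (‖w - x‖ * r)) := by ring
          _ = _ := by rw [hBe]
      exact le_of_mul_le_mul_left this hr2

lemma cr_comm_abs (u v : ℂ) : |cr u v| = |cr v u| := by
  rw [← abs_neg]; congr 1; simp [cr]; ring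

lemma flat2 (h : Adm P M K α r₁) {B : ℝ} (hB : 16 * K / (1 - 2⁻¹ ^ α) = B) {a b c : ℂ}
    (ha : a ∉ P ∪ M) (hb : b ∉ P ∪ M) (hc : c ∉ P ∪ M) {D : ℝ} (hD : D ≤ r₁)
    (hba : ‖b - a‖ ≤ D) (hca : ‖c - a‖ ≤ D) :
    |cr (b - a) (c - a)| ≤ B * D ^ α * (‖b - a‖ * ‖c - a‖) := by
  have hα := h.αpos
  have hK := h.Kpos
  have q1 : (2⁻¹ : ℝ) ^ α < 1 := Real.rpow_lt_one (by norm_num) (by norm_num) hα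
  have hB0 : 0 < B := by rw [← hB]; apply div_pos (by positivity) (by linarith)
  have main : ∀ b c : ℂ, b ∉ P ∪ M → c ∉ P ∪ M → ‖c - a‖ ≤ D → ‖b - a‖ ≤ ‖c - a‖ →
      |cr (b - a) (c - a)| ≤ B * D ^ α * (‖b - a‖ * ‖c - a‖) := by
    intro b c hb hc hca hbc
    by_cases hb0 : b = a
    · simp [hb0, cr]
    have hs : 0 < ‖b - a‖ := norm_pos_iff.2 (sub_ne_zero.2 hb0)
    have hs' : 0 < ‖c - a‖ := hs.trans_le hbc
    obtain ⟨n, hn⟩ := exists_pow_lt_of_lt_one (div_pos hs hs') (by norm_num : (2⁻¹ : ℝ) < 1)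
    have := h.flat2aux hB ha hb n c hc _ hs' (hca.trans hD) rfl hbc
      (by rw [lt_div_iff₀ hs'] at hn; exact hn.le)
    refine this.trans ?_
    gcongr
  rcases le_total ‖b - a‖ ‖c - a‖ with hle | hle
  · exact main b c hb hc hca hle
  · rw [cr_comm_abs, mul_comm ‖b - a‖]
    exact main c b hc hb hba hle

end Adm
lemma oneD {g : ℝ → ℝ} {L B α : ℝ} (hL : 0 < L) (hL1 : L ≤ 1) (hB : 0 ≤ B) (hα : 0 < α)
    (hs : ∀ a ∈ Icc (-L) L, ∀ b ∈ Icc (-L) L, ∀ c ∈ Icc (-L) L, b ≠ a → c ≠ a →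
      |(g b - g a) / (b - a) - (g c - g a) / (c - a)| ≤ B * (max |b - a| |c - a|) ^ α) :
    ∃ (g' : ℝ → ℝ) (M : NNReal), ContDiff ℝ 1 g' ∧ HolderWith M (Real.toNNReal (α / 16)) (deriv g') ∧
      ∀ t ∈ Icc (-(L / 2)) (L / 2), g' t = g t := by
  have step1 : ∀ a ∈ Ioo (-L) L, ∃ h : ℝ, ∀ b ∈ Icc (-L) L, b ≠ a →
      |(g b - g a) / (b - a) - h| ≤ B * |b - a| ^ α := by
    intro a ha
    have hd : 0 < L - a := by linarith [ha.2]
    let d : ℕ → ℝ := fun n => (L - a) / (n + 1)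
    have hd0 : ∀ n, 0 < d n := fun n => by positivity
    have hdL : ∀ n, d n ≤ L - a := fun n => div_le_self hd.le (by linarith [(Nat.cast_nonneg n : (0:ℝ) ≤ n)])
    have hdm : ∀ n m, n ≤ m → d m ≤ d n := by
      intro n m hnm
      have : (n : ℝ) ≤ m := by exact_mod_cast hnm
      simp only [d]; gcongr
    have hdt : Filter.Tendsto d Filter.atTop (nhds 0) := by
      have := (tendsto_one_div_add_atTop_nhds_zero_nat (𝕜 := ℝ)).const_mul (L - a)
      simpa [d, div_eq_mul_inv] using this
    have hmem : ∀ n, a + d n ∈ Icc (-L) L := fun n =>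
      ⟨by linarith [ha.1, hd0 n], by linarith [hdL n]⟩
    have haI : a ∈ Icc (-L) L := ⟨ha.1.le, ha.2.le⟩
    have hne : ∀ n, a + d n ≠ a := fun n => by linarith [hd0 n]
    let S : ℕ → ℝ := fun n => (g (a + d n) - g a) / (a + d n - a)
    have habs : ∀ n, |a + d n - a| = d n := fun n => by
      rw [add_sub_cancel_left, abs_of_pos (hd0 n)]
    have hcau : CauchySeq S := by
      apply cauchySeq_of_le_tendsto_0' (fun n => B * (d n) ^ α)
      · intro n m hnm
        have := hs a haI _ (hmem n) _ (hmem m) (hne n) (hne m)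
        rw [habs, habs, max_eq_left (hdm n m hnm)] at this
        rw [Real.dist_eq]; exact this
      · have := (hdt.rpow_const (p := α) (Or.inr hα.le)).const_mul B
        rw [Real.zero_rpow hα.ne', mul_zero] at this
        exact this
    obtain ⟨h, hh⟩ := cauchySeq_tendsto_of_complete hcau
    refine ⟨h, fun b hb hba => ?_⟩
    have hba' : 0 < |b - a| := abs_pos.2 (sub_ne_zero.2 hba)
    apply le_of_tendsto (tendsto_const_nhds.sub hh).abs
    filter_upwards [hdt.eventually (gt_mem_nhds hba')] with n hn
    have := hs a haI b hb _ (hmem n) hba (hne n)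
    rw [habs, max_eq_left hn.le] at this
    exact this
  choose! h hh using step1
  have step2 : ∀ a ∈ Ioo (-L) L, HasDerivAt g (h a) a := by
    intro a ha
    rw [hasDerivAt_iff_tendsto_slope, tendsto_iff_norm_sub_tendsto_zero]
    have h0 : Filter.Tendsto (fun b => B * |b - a| ^ α) (nhdsWithin a {a}ᶜ) (nhds 0) := by
      have c : Continuous fun b => B * |b - a| ^ α :=
        continuous_const.mul ((by fun_prop : Continuous fun b => |b - a|).rpow_const
          (fun _ => Or.inr hα.le))
      have := c.tendsto a
      simp [Real.zero_rpow hα.ne'] at this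
      exact this.mono_left nhdsWithin_le_nhds
    apply squeeze_zero' (Filter.Eventually.of_forall fun _ => norm_nonneg _) _ h0
    have e1 : ∀ᶠ b in nhdsWithin a {a}ᶜ, b ∈ Icc (-L) L :=
      nhdsWithin_le_nhds (Icc_mem_nhds ha.1 ha.2)
    filter_upwards [e1, self_mem_nhdsWithin] with b hb hne
    rw [slope_def_field, Real.norm_eq_abs]
    exact hh a ha b hb hne
  have step3 : ∀ a ∈ Ioo (-L) L, ∀ b ∈ Ioo (-L) L, |h a - h b| ≤ 2 * B * |a - b| ^ α := by
    intro a ha b hb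
    by_cases hab : a = b
    · simp [hab]; positivity
    have h1 := hh a ha b ⟨hb.1.le, hb.2.le⟩ (Ne.symm hab)
    have h2 := hh b hb a ⟨ha.1.le, ha.2.le⟩ hab
    have e : (g a - g b) / (a - b) = (g b - g a) / (b - a) := by
      rw [← neg_div_neg_eq]; ring_nf
    rw [e] at h2
    rw [abs_sub_comm b a] at h1
    have := abs_sub_le (h a) ((g b - g a) / (b - a)) (h b)
    rw [abs_sub_comm (h a) ((g b - g a) / (b - a))] at this
    linarith
  let k : ℝ → ℝ := fun t => max (-(L / 2)) (min (L / 2) t)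
  have kI : ∀ t, k t ∈ Icc (-(L / 2)) (L / 2) := fun t =>
    ⟨le_max_left _ _, max_le (by linarith) (min_le_left _ _)⟩
  have kO : ∀ t, k t ∈ Ioo (-L) L := fun t => ⟨by linarith [(kI t).1], by linarith [(kI t).2]⟩
  have kl : ∀ s t, |k s - k t| ≤ |s - t| := by
    intro s t
    have h1 : |k s - k t| ≤ |min (L / 2) s - min (L / 2) t| := by
      have := abs_max_sub_max_le_max (-(L / 2)) (min (L / 2) s) (-(L / 2)) (min (L / 2) t)
      simpa using this
    have h2 : |min (L / 2) s - min (L / 2) t| ≤ |s - t| := by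
      have := abs_min_sub_min_le_max (L / 2) s (L / 2) t
      simpa using this
    exact h1.trans h2
  have k1 : ∀ s t, |k s - k t| ≤ 1 := by
    intro s t
    rw [abs_le]
    constructor <;> linarith [(kI s).1, (kI s).2, (kI t).1, (kI t).2]
  have hH : HolderWith (Real.toNNReal (2 * B)) (Real.toNNReal (α / 16)) (fun t => h (k t)) := by
    intro s t
    have hα' : 0 ≤ α / 16 := by positivity
    have key : |h (k s) - h (k t)| ≤ 2 * B * |s - t| ^ (α / 16) := by
      refine (step3 _ (kO s) _ (kO t)).trans ?_
      gcongr
      by_cases h0 : |k s - k t| = 0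
      · rw [h0, Real.zero_rpow hα.ne']; positivity
      · have hp : 0 < |k s - k t| := lt_of_le_of_ne (abs_nonneg _) (Ne.symm h0)
        calc |k s - k t| ^ α ≤ |k s - k t| ^ (α / 16) :=
              Real.rpow_le_rpow_of_exponent_ge hp (k1 s t) (by linarith)
          _ ≤ _ := Real.rpow_le_rpow hp.le (kl s t) hα'
    rw [edist_dist, edist_dist, Real.dist_eq, Real.dist_eq, Real.coe_toNNReal _ hα',
      ENNReal.ofReal_rpow_of_nonneg (abs_nonneg _) hα']
    change _ ≤ ENNReal.ofReal (2 * B) * _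
    rw [← ENNReal.ofReal_mul (by positivity)]
    exact ENNReal.ofReal_le_ofReal key
  have hHc : Continuous (fun t => h (k t)) := by
    apply hH.continuous
    rw [Real.toNNReal_pos]; positivity
  have hG : ∀ t, HasDerivAt (fun t => g 0 + ∫ s in (0:ℝ)..t, h (k s)) (h (k t)) t := by
    intro t
    exact (intervalIntegral.integral_hasDerivAt_right (hHc.intervalIntegrable _ _)
      (hHc.stronglyMeasurableAtFilter _ _) hHc.continuousAt).const_add _
  have hder : deriv (fun t => g 0 + ∫ s in (0:ℝ)..t, h (k s)) = fun t => h (k t) :=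
    funext fun t => (hG t).deriv
  refine ⟨fun t => g 0 + ∫ s in (0:ℝ)..t, h (k s), Real.toNNReal (2 * B), ?_, ?_, ?_⟩
  · rw [contDiff_one_iff_deriv]
    exact ⟨fun t => (hG t).differentiableAt, by rw [hder]; exact hHc⟩
  · rw [hder]; exact hH
  · intro t ht
    have : ∫ s in (0:ℝ)..t, h (k s) = g t - g 0 := by
      apply intervalIntegral.integral_eq_sub_of_hasDerivAt _ (hHc.intervalIntegrable _ _)
      intro s hs
      have hsI : s ∈ Icc (-(L / 2)) (L / 2) := by
        have h0 : (0 : ℝ) ∈ Icc (-(L / 2)) (L / 2) := ⟨by linarith, by linarith⟩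
        exact uIcc_subset_Icc h0 ht hs
      have : k s = s := by
        simp only [k]; rw [min_eq_right hsI.2, max_eq_right hsI.1]
      rw [this]
      exact step2 s ⟨by linarith [hsI.1], by linarith [hsI.2]⟩
    simp only [this]; ring
namespace Adm
variable {P M : Set ℂ} {K α r₁ : ℝ}

lemma opp (h : Adm P M K α r₁) {R : ℝ} (hR : 0 < R) (hR1 : R ≤ r₁) (h0 : (0 : ℂ) ∉ P ∪ M)
    (hp : (R : ℂ) ∉ P ∪ M) : ∃ z : ℂ, z ∉ P ∪ M ∧ ‖z‖ = R ∧ z.re ≤ -(0.9 * R) := by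
  obtain ⟨n, hn, ha, hG⟩ := h.arc' h0 hR hR1
  have sm := h.sm hR.le hR1
  have hk := h.Kn hR.le
  have nR : ‖(R : ℂ)‖ = R := by simp [hR.le]
  have b1 := hG R nR (by simpa using hp)
  have hD : K * R ^ α * R ≤ R / 1000 := by nlinarith
  have e1 : ip R n = R * n.re := by simp [ip]
  rw [e1, abs_mul, abs_of_pos hR] at b1
  have b2 : |n.re| ≤ 1 / 1000 := by
    have : R * |n.re| ≤ R * (1 / 1000) := by linarith
    exact le_of_mul_le_mul_left this hR
  have n1 := nsq n
  rw [hn] at n1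
  have b3 := abs_le.1 b2
  have him : (0.9 : ℝ) ^ 2 ≤ n.im ^ 2 := by nlinarith
  let p : ℝ → ℂ := fun s => -((√(R ^ 2 - s ^ 2) : ℝ) : ℂ) + s * Complex.I
  have hpc : Continuous p := by fun_prop
  have hS : IsPreconnected (p '' Icc (-R) R) := isPreconnected_Icc.image _ hpc.continuousOn
  have hle : -R ≤ R := by linarith
  have m1 : (R : ℂ) * Complex.I ∈ p '' Icc (-R) R := ⟨R, right_mem_Icc.2 hle, by simp [p]⟩
  have m2 : -((R : ℂ) * Complex.I) ∈ p '' Icc (-R) R := ⟨-R, left_mem_Icc.2 hle, by simp [p]⟩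
  have nn1 : ‖(R : ℂ) * Complex.I‖ = R := by simp [hR.le]
  have nn2 : ‖-((R : ℂ) * Complex.I)‖ = R := by rw [norm_neg, nn1]
  have i1 : ip ((R : ℂ) * Complex.I) n = R * n.im := by simp [ip]
  have i2 : ip (-((R : ℂ) * Complex.I)) n = -(R * n.im) := by simp [ip]
  have hex : ∃ z ∈ p '' Icc (-R) R, z ∉ P ∪ M := by
    rcases le_total 0 n.im with hb0 | hb0
    · have h9 : 0.9 ≤ n.im := sqle him hb0
      refine h.cross hS ⟨_, m1, ?_⟩ ⟨_, m2, ?_⟩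
      · have := (ha _ nn1).1 (by rw [i1]; nlinarith)
        rwa [zero_add] at this
      · have := (ha _ nn2).2 (by rw [i2]; nlinarith)
        rwa [zero_add] at this
    · have h9 : 0.9 ≤ -n.im := sqle (by rw [neg_sq]; exact him) (by linarith)
      refine h.cross hS ⟨_, m2, ?_⟩ ⟨_, m1, ?_⟩
      · have := (ha _ nn2).1 (by rw [i2]; nlinarith)
        rwa [zero_add] at this
      · have := (ha _ nn1).2 (by rw [i1]; nlinarith)
        rwa [zero_add] at this
  obtain ⟨z, ⟨s, hs, rfl⟩, hz⟩ := hex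
  have hs2 : 0 ≤ R ^ 2 - s ^ 2 := by nlinarith [hs.1, hs.2]
  have hq := Real.sq_sqrt hs2
  have hq0 := Real.sqrt_nonneg (R ^ 2 - s ^ 2)
  have hre : (p s).re = -√(R ^ 2 - s ^ 2) := by simp [p]
  have him' : (p s).im = s := by simp [p]
  have hnp : ‖p s‖ = R := by
    rw [← sq_eq_sq₀ (norm_nonneg _) hR.le, nsq, hre, him', neg_sq, hq]; ring
  refine ⟨p s, hz, hnp, ?_⟩
  have hpair := h.pair h0 hp hz hR hR1 (by simp [hR.le]) (by simpa using hnp)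
  have e2 : cr ((R : ℂ) - 0) (p s - 0) = R * s := by simp [cr, him']
  rw [e2, abs_mul, abs_of_pos hR] at hpair
  have hs3 : |s| ≤ R / 500 := by
    have : R * |s| ≤ R * (R / 500) := by nlinarith
    exact le_of_mul_le_mul_left this hR
  have hs4 := abs_le.1 hs3
  rw [hre]
  have : 0.9 * R ≤ √(R ^ 2 - s ^ 2) := by
    apply sqle _ hq0
    rw [hq]; nlinarith
  linarith

lemma lip (h : Adm P M K α r₁) {B : ℝ} (hB : 16 * K / (1 - 2⁻¹ ^ α) = B) {R : ℝ} (hR : 0 < R)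
    (hR1 : 4 * R ≤ r₁) (hBR : B * (2 * R) ^ α ≤ 1 / 20) (h0 : (0 : ℂ) ∉ P ∪ M)
    (hp : (R : ℂ) ∉ P ∪ M) {w w' : ℂ} (hw : w ∉ P ∪ M) (hw' : w' ∉ P ∪ M) (hwR : ‖w‖ ≤ R / 4)
    (hwR' : ‖w'‖ ≤ R / 4) : |(w' - w).im| ≤ 1 / 5 * |(w' - w).re| := by
  have nR : ‖(R : ℂ)‖ = R := by simp [hR.le]
  have d1 : ‖w' - w‖ ≤ 2 * R := (norm_sub_le _ _).trans (by linarith)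
  have d2 : ‖(R : ℂ) - w‖ ≤ 2 * R := (norm_sub_le _ _).trans (by linarith)
  have d3 : ‖w - (R : ℂ)‖ ≤ 2 * R := (norm_sub_le _ _).trans (by linarith)
  have d4 : ‖(0 : ℂ) - R‖ ≤ 2 * R := by rw [zero_sub, norm_neg, nR]; linarith
  have f1 := h.flat2 hB hw hw' hp (D := 2 * R) (by linarith) d1 d2
  have f2 := h.flat2 hB hp hw h0 (D := 2 * R) (by linarith) d3 d4
  have e1 : cr (w - (R : ℂ)) (0 - (R : ℂ)) = cr ((R : ℂ) - w) R := by simp [cr]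
  rw [e1, zero_sub, norm_neg, nR, norm_sub_rev] at f2
  have f3 := cr_tri (w' - w) ((R : ℂ) - w) R
  rw [nR] at f3
  have hpos : 0 < ‖(R : ℂ) - w‖ := by
    have := norm_sub_norm_le (R : ℂ) w
    rw [nR] at this
    linarith
  have hn := norm_nonneg (w' - w)
  have f4 : ‖(R : ℂ) - w‖ * |cr (w' - w) R| ≤ ‖(R : ℂ) - w‖ * (R * (‖w' - w‖ / 10)) := by
    refine f3.trans ?_
    calc ‖w' - w‖ * |cr ((R : ℂ) - w) R| + R * |cr (w' - w) ((R : ℂ) - w)|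
        ≤ ‖w' - w‖ * (B * (2 * R) ^ α * (‖(R : ℂ) - w‖ * R))
          + R * (B * (2 * R) ^ α * (‖w' - w‖ * ‖(R : ℂ) - w‖)) := by gcongr
      _ = B * (2 * R) ^ α * (2 * (‖w' - w‖ * ‖(R : ℂ) - w‖ * R)) := by ring
      _ ≤ 1 / 20 * (2 * (‖w' - w‖ * ‖(R : ℂ) - w‖ * R)) := by gcongr
      _ = _ := by ring
  have f5 := le_of_mul_le_mul_left f4 hpos
  have e2 : |cr (w' - w) R| = R * |(w' - w).im| := by
    have : cr (w' - w) R = -(R * (w' - w).im) := by simp [cr]; ring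
    rw [this, abs_neg, abs_mul, abs_of_pos hR]
  rw [e2] at f5
  have f6 := le_of_mul_le_mul_left f5 hR
  have f7 := nsq (w' - w)
  apply sqle _ (by positivity)
  rw [mul_pow, sq_abs, sq_abs]
  have f8 : |(w' - w).im| ^ 2 ≤ (‖w' - w‖ / 10) ^ 2 := by gcongr
  rw [sq_abs] at f8
  nlinarith [sq_nonneg (w' - w).re]

lemma surj (h : Adm P M K α r₁) {R : ℝ} (hR : 0 < R) (hR1 : R ≤ r₁) (h0 : (0 : ℂ) ∉ P ∪ M)
    (hp : (R : ℂ) ∉ P ∪ M) {t : ℝ} (ht : t ∈ Icc (-(R / 8)) (R / 8)) :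
    ∃ q : ℂ, q ∉ P ∪ M ∧ q.re = t ∧ ‖q‖ < R / 4 := by
  have sm := h.sm hR.le hR1
  have hk := h.Kn hR.le
  have hE : 6 * (K * R ^ α) * R ≤ R / 100 := by nlinarith
  obtain ⟨ht1, ht2⟩ := ht
  rcases le_total 0 t with h1 | h1
  · obtain ⟨q, hq, hqt, τ, hτ, he⟩ := h.ivt Complex.continuous_re (c := t) h0 hp hR hR1
      (by simp [abs_of_pos hR]) (by simpa using h1) (by simp; linarith)
    refine ⟨q, hq, hqt, ?_⟩
    have he' := he.trans hE
    simp only [sub_zero, zero_add] at he'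
    have a1 := (Complex.abs_re_le_norm (q - τ * R)).trans he'
    have e : (q - τ * R).re = t - τ * R := by simp [hqt]
    rw [e, abs_le] at a1
    have a2 : ‖(τ : ℂ) * R‖ = τ * R := by
      rw [norm_mul]; simp [abs_of_nonneg hτ.1, abs_of_pos hR]
    have a3 := norm_add_le (q - τ * R) (τ * R)
    rw [sub_add_cancel, a2] at a3
    linarith [a1.1]
  · obtain ⟨p, hpG, hpR, hpre⟩ := h.opp hR hR1 h0 hp
    obtain ⟨q, hq, hqt, τ, hτ, he⟩ := h.ivt (f := fun z => -z.re) (Complex.continuous_re.neg)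
      (c := -t) h0 hpG hR hR1
      (by simp [hpR]) (by simpa using h1) (by linarith)
    have hqt : q.re = t := by simpa using hqt
    refine ⟨q, hq, hqt, ?_⟩
    have he' := he.trans hE
    simp only [sub_zero, zero_add] at he'
    have a1 := (Complex.abs_re_le_norm (q - τ * p)).trans he'
    have e : (q - τ * p).re = t - τ * p.re := by simp [hqt]
    rw [e, abs_le] at a1
    have a2 : ‖(τ : ℂ) * p‖ = τ * R := by
      rw [norm_mul, hpR]; simp [abs_of_nonneg hτ.1]
    have a3 := norm_add_le (q - τ * p) (τ * p)
    rw [sub_add_cancel, a2] at a3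
    have a4 : τ * p.re ≤ τ * (-(0.9 * R)) := mul_le_mul_of_nonneg_left hpre hτ.1
    nlinarith [a1.2]

lemma graph (h : Adm P M K α r₁) {B : ℝ} (hB : 16 * K / (1 - 2⁻¹ ^ α) = B) {R : ℝ} (hR : 0 < R)
    (hR1 : 4 * R ≤ r₁) (hBR : B * (2 * R) ^ α ≤ 1 / 20) (h0 : (0 : ℂ) ∉ P ∪ M)
    (hp : (R : ℂ) ∉ P ∪ M) : ∃ (U : Set ℂ) (g : ℝ → ℝ) (ρ : ℝ) (N : NNReal), IsOpen U ∧ 0 ∈ U ∧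
      0 < ρ ∧ ContDiff ℝ 1 g ∧ HolderWith N (Real.toNNReal (α / 16)) (deriv g) ∧
      {z | z ∉ P ∪ M} ∩ U = (fun t : ℝ => (⟨t, g t⟩ : ℂ)) '' Ioo (-ρ) ρ := by
  have hα := h.αpos
  have hK := h.Kpos
  have q1 : (2⁻¹ : ℝ) ^ α < 1 := Real.rpow_lt_one (by norm_num) (by norm_num) hα
  have hB0 : 0 < B := by rw [← hB]; apply div_pos (by positivity) (by linarith)
  have hsurj : ∀ t ∈ Icc (-(R / 8)) (R / 8), ∃ y : ℝ, (⟨t, y⟩ : ℂ) ∉ P ∪ M ∧ ‖(⟨t, y⟩ : ℂ)‖ < R / 4 := by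
    intro t ht
    obtain ⟨q, hq, hqt, hqR⟩ := h.surj hR (by linarith) h0 hp ht
    refine ⟨q.im, ?_⟩
    have : (⟨t, q.im⟩ : ℂ) = q := by rw [← hqt]
    rw [this]; exact ⟨hq, hqR⟩
  choose! g hg1 hg2 using hsurj
  have hlip : ∀ a ∈ Icc (-(R / 8)) (R / 8), ∀ b ∈ Icc (-(R / 8)) (R / 8),
      |g b - g a| ≤ 1 / 5 * |b - a| := by
    intro a ha b hb
    have := h.lip hB hR hR1 hBR h0 hp (hg1 a ha) (hg1 b hb) (hg2 a ha).le (hg2 b hb).le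
    simpa using this
  have hnorm : ∀ a ∈ Icc (-(R / 8)) (R / 8), ∀ b ∈ Icc (-(R / 8)) (R / 8),
      ‖(⟨b, g b⟩ - ⟨a, g a⟩ : ℂ)‖ ≤ 6 / 5 * |b - a| := by
    intro a ha b hb
    have := Complex.norm_le_abs_re_add_abs_im (⟨b, g b⟩ - ⟨a, g a⟩ : ℂ)
    simp only [Complex.sub_re, Complex.sub_im] at this
    linarith [hlip a ha b hb]
  obtain ⟨g', N, hg'1, hg'2, hg'3⟩ := oneD (g := g) (L := R / 8) (B := 3 * B) (α := α) (by positivity)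
    (by linarith [h.rle]) (by positivity) hα (by
      intro a ha b hb c hc hba hca
      have hba' : 0 < |b - a| := abs_pos.2 (sub_ne_zero.2 hba)
      have hca' : 0 < |c - a| := abs_pos.2 (sub_ne_zero.2 hca)
      have n1 := hnorm a ha b hb
      have n2 := hnorm a ha c hc
      set m := max |b - a| |c - a| with hm
      have m1 : |b - a| ≤ m := le_max_left _ _
      have m2 : |c - a| ≤ m := le_max_right _ _
      have m3 : m ≤ R / 4 := by
        apply max_le <;> rw [abs_le] <;> constructor <;>
          linarith [ha.1, ha.2, hb.1, hb.2, hc.1, hc.2]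
      have f := h.flat2 hB (hg1 a ha) (hg1 b hb) (hg1 c hc) (D := 2 * m) (by linarith)
        (by linarith) (by linarith)
      have e : cr (⟨b, g b⟩ - ⟨a, g a⟩ : ℂ) (⟨c, g c⟩ - ⟨a, g a⟩ : ℂ) =
          -(((b - a) * (c - a)) * ((g b - g a) / (b - a) - (g c - g a) / (c - a))) := by
        have h1 : b - a ≠ 0 := sub_ne_zero.2 hba
        have h2 : c - a ≠ 0 := sub_ne_zero.2 hca
        simp only [cr, Complex.sub_re, Complex.sub_im]
        field_simp
        ring
      rw [e, abs_neg, abs_mul, abs_mul] at f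
      have hmp : 0 < m := hba'.trans_le m1
      have e2 : (2 * m) ^ α ≤ 2 * m ^ α := by
        rw [Real.mul_rpow (by norm_num) hmp.le]
        gcongr
        calc (2 : ℝ) ^ α ≤ 2 ^ (1 : ℝ) := Real.rpow_le_rpow_of_exponent_le (by norm_num) h.αlt.le
          _ = 2 := Real.rpow_one 2
      have hmα : 0 ≤ m ^ α := by positivity
      have hprod : 0 < |b - a| * |c - a| := by positivity
      refine le_of_mul_le_mul_left (f.trans ?_) hprod
      calc B * (2 * m) ^ α * (‖(⟨b, g b⟩ - ⟨a, g a⟩ : ℂ)‖ * ‖(⟨c, g c⟩ - ⟨a, g a⟩ : ℂ)‖)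
          ≤ B * (2 * m ^ α) * ((6 / 5 * |b - a|) * (6 / 5 * |c - a|)) := by gcongr
        _ = (2.88 * B * m ^ α) * (|b - a| * |c - a|) := by ring
        _ ≤ (3 * B * m ^ α) * (|b - a| * |c - a|) := by gcongr; norm_num
        _ = _ := by ring)
  refine ⟨{z | z.re ∈ Ioo (-(R / 16)) (R / 16) ∧ ‖z‖ < R / 4}, g', R / 16, N, ?_, ?_, by positivity,
    hg'1, hg'2, ?_⟩
  · exact (isOpen_Ioo.preimage Complex.continuous_re).inter
      (isOpen_lt continuous_norm continuous_const)
  · simp; positivity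
  · ext z
    constructor
    · rintro ⟨hz, hz1, hz2⟩
      refine ⟨z.re, hz1, ?_⟩
      have hI : z.re ∈ Icc (-(R / 8)) (R / 8) := ⟨by linarith [hz1.1], by linarith [hz1.2]⟩
      have := h.lip hB hR hR1 hBR h0 hp (hg1 _ hI) hz (hg2 _ hI).le hz2.le
      have h2 : z.im = g z.re := by
        simp at this; linarith
      have h3 := hg'3 z.re ⟨by linarith [hz1.1], by linarith [hz1.2]⟩
      simp only [h3, ← h2]
    · rintro ⟨t, ht, rfl⟩
      have hI : t ∈ Icc (-(R / 8)) (R / 8) := ⟨by linarith [ht.1], by linarith [ht.2]⟩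
      have h3 := hg'3 t ⟨by linarith [ht.1], by linarith [ht.2]⟩
      simp only [h3]
      exact ⟨hg1 t hI, ht, hg2 t hI⟩

/-- invariance under direct isometries -/
lemma shift (h : Adm P M K α r₁) (x e : ℂ) (he : ‖e‖ = 1) :
    Adm ((fun y => x + e * y) ⁻¹' P) ((fun y => x + e * y) ⁻¹' M) K α r₁ where
  oP := h.oP.preimage (by fun_prop)
  oM := h.oM.preimage (by fun_prop)
  disj := h.disj.preimage _
  Kpos := h.Kpos
  αpos := h.αpos
  αlt := h.αlt
  rpos := h.rpos
  rle := h.rle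
  small := h.small
  arc := by
    intro y hy r hr hr1
    obtain ⟨n, hn, ha⟩ := h.arc (x + e * y) (by simpa using hy) r hr hr1
    refine ⟨(starRingEnd ℂ) e * n, by simp [he, hn], fun v hv => ?_⟩
    have hi : ip v ((starRingEnd ℂ) e * n) = ip (e * v) n := by simp [ip]; ring
    have hh := ha (e * v) (by simp [he, hv])
    have e1 : x + e * (y + v) = x + e * y + e * v := by ring
    simp only [mem_preimage, e1, hi]
    exact hh

end Adm
/-- the standard identification of `ℂ` with the Euclidean plane -/
def JJ : ℂ ≃ₗᵢ[ℝ] E2 := Complex.orthonormalBasisOneI.repr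

lemma JJ_mk (a b : ℝ) : (EuclideanSpace.equiv (Fin 2) ℝ).symm ![a, b] = JJ ⟨a, b⟩ := rfl

lemma circlePt_JJ (x : ℂ) (r t : ℝ) :
    circlePt (JJ x) r t = JJ (x + r * Complex.exp (Complex.I * t)) := by
  have : Complex.exp (Complex.I * t) = ⟨Real.cos t, Real.sin t⟩ := by
    rw [mul_comm, Complex.exp_mul_I]
    apply Complex.ext <;> simp [Complex.cos_ofReal_re, Complex.sin_ofReal_re]
  rw [circlePt, JJ_mk, this, map_add, ← Complex.real_smul, map_smul]

lemma circlePt_lip (x : ℂ) {r : ℝ} (hr : 0 < r) :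
    LipschitzWith (Real.toNNReal r) (circlePt (JJ x) r) := by
  apply LipschitzWith.of_dist_le_mul
  intro s t
  rw [circlePt_JJ, circlePt_JJ, JJ.dist_map, dist_eq_norm, Real.coe_toNNReal _ hr.le, Real.dist_eq]
  have e : x + r * Complex.exp (Complex.I * s) - (x + r * Complex.exp (Complex.I * t)) =
      r * (Complex.exp (Complex.I * t) * (Complex.exp (Complex.I * ((s - t : ℝ) : ℂ)) - 1)) := by
    have : Complex.exp (Complex.I * s) =
        Complex.exp (Complex.I * t) * Complex.exp (Complex.I * ((s - t : ℝ) : ℂ)) := by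
      rw [← Complex.exp_add]; congr 1; push_cast; ring
    rw [this]; ring
  rw [e, norm_mul, norm_mul, Complex.norm_real, Real.norm_eq_abs, abs_of_pos hr,
    Complex.norm_exp_I_mul_ofReal, one_mul]
  gcongr
  exact Real.norm_exp_I_mul_ofReal_sub_one_le

lemma arc_length (x : ℂ) {r : ℝ} (hr : 0 < r) (a b : ℝ) :
    μH[1] (circlePt (JJ x) r '' Ioo a b) ≤ ENNReal.ofReal (r * (b - a)) := by
  refine ((circlePt_lip x hr).hausdorffMeasure_image_le (d := 1) zero_le_one _).trans ?_
  rw [hausdorffMeasure_real, Real.volume_Ioo, ENNReal.rpow_one, ENNReal.ofReal_mul hr.le]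
  rfl

/-- a long arc contains all directions with sufficiently positive normal component -/
lemma exists_normal (Ω : Set E2) (x : ℂ) {r δ : ℝ} (hr : 0 < r) (hδ : 0 < δ) (hδ1 : δ ≤ 1)
    (hm : (Real.pi - δ) * r ≤ maxArcMeasure Ω (JJ x) r) :
    ∃ n : ℂ, ‖n‖ = 1 ∧ ∀ v, ‖v‖ = r → δ * r < ip v n → JJ (x + v) ∈ Ω := by
  have hpi := Real.pi_gt_three
  have hlt : (Real.pi - 2 * δ) * r < maxArcMeasure Ω (JJ x) r := by nlinarith
  rw [maxArcMeasure, ← ENNReal.ofReal_lt_iff_lt_toReal (by nlinarith) (by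
    intro htop
    rw [htop] at hlt
    simp at hlt
    nlinarith)] at hlt
  simp only [lt_iSup_iff] at hlt
  obtain ⟨A, ⟨⟨a, b, hab, hab2, rfl⟩, hA⟩, hlt⟩ := hlt
  have hlt2 := hlt.trans_le (arc_length x hr a b)
  rw [ENNReal.ofReal_lt_ofReal_iff (by nlinarith)] at hlt2
  have hlen : Real.pi - 2 * δ < b - a := by
    rw [mul_comm] at hlt2
    exact lt_of_mul_lt_mul_left hlt2 hr.le
  set m := (a + b) / 2 with hmdef
  set n : ℂ := Complex.exp (Complex.I * m) with hn
  have hn1 : ‖n‖ = 1 := Complex.norm_exp_I_mul_ofReal m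
  refine ⟨n, hn1, fun v hv hip => ?_⟩
  apply hA
  set u := v * (starRingEnd ℂ) n with hu
  have hnu : ‖u‖ = r := by rw [hu, norm_mul, RCLike.norm_conj, hn1, hv, mul_one]
  have hue := Complex.norm_mul_exp_arg_mul_I u
  rw [hnu] at hue
  have hnn : (starRingEnd ℂ) n * n = 1 := by
    rw [mul_comm, Complex.mul_conj, Complex.normSq_eq_norm_sq, hn1]; simp
  have hvu : v = u * n := by rw [hu, mul_assoc, hnn, mul_one]
  have hre : ip v n = u.re := by simp [ip, hu]
  have hre2 : u.re = r * Real.cos u.arg := by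
    conv_lhs => rw [← hue]
    rw [Complex.re_ofReal_mul, Complex.exp_ofReal_mul_I_re]
  have hcos : δ < Real.cos u.arg := by
    rw [hre, hre2, mul_comm] at hip
    exact lt_of_mul_lt_mul_left hip hr.le
  have habs : |u.arg| < Real.pi / 2 - δ := by
    by_contra hc
    have h1 := Real.cos_le_cos_of_nonneg_of_le_pi (by linarith) (Complex.abs_arg_le_pi u)
      (not_lt.1 hc)
    rw [Real.cos_abs, Real.cos_pi_div_two_sub] at h1
    linarith [Real.sin_le hδ.le]
  rw [abs_lt] at habs
  refine ⟨m + u.arg, ⟨by linarith [habs.1], by linarith [habs.2]⟩, ?_⟩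
  rw [circlePt_JJ]
  congr 2
  rw [hvu, ← hue, hn, mul_assoc, ← Complex.exp_add]
  congr 2
  push_cast
  have e : Complex.arg (r * Complex.exp (u.arg * Complex.I)) = u.arg := by rw [hue]
  rw [e]; ring

lemma rpow_small {C α ε : ℝ} (hC : 0 < C) (hα : 0 < α) (hε : 0 < ε) :
    ∃ s : ℝ, 0 < s ∧ ∀ r, 0 ≤ r → r ≤ s → C * r ^ α ≤ ε := by
  refine ⟨(ε / C) ^ (1 / α), by positivity, fun r hr hrs => ?_⟩
  have h1 := Real.rpow_le_rpow hr hrs hα.le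
  rw [← Real.rpow_mul (by positivity), one_div_mul_cancel hα.ne', Real.rpow_one] at h1
  rw [le_div_iff₀ hC] at h1
  linarith

lemma mem_compl_iff_frontier {Ω : Set E2} (hΩ : IsOpen Ω) (z : ℂ) :
    z ∉ (JJ ⁻¹' Ω) ∪ (JJ ⁻¹' (closure Ω)ᶜ) ↔ JJ z ∈ frontier Ω := by
  rw [hΩ.frontier_eq]
  simp only [mem_union, mem_preimage, mem_compl_iff, mem_sdiff]
  tauto

lemma adm_of (Ω : Set E2) (hΩ : IsOpen Ω) {α C₀ r₀ : ℝ} (hα : α ∈ Ioo (0 : ℝ) 1) (hC₀ : 0 < C₀)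
    (hr₀ : 0 < r₀)
    (hε : ∀ x ∈ frontier Ω, ∀ r : ℝ, 0 < r → r ≤ r₀ → carlesonEps Ω x r ≤ C₀ * r ^ α) :
    ∃ r₁, Adm (JJ ⁻¹' Ω) (JJ ⁻¹' (closure Ω)ᶜ) (3 * C₀) α r₁ := by
  obtain ⟨s, hs, hsm⟩ := rpow_small (C := 3 * C₀) (by positivity) hα.1 (by norm_num : (0:ℝ) < 1 / 1000)
  have hr1 : 0 < min s (min r₀ 1) := by positivity
  have hdisj : Disjoint (JJ ⁻¹' Ω) (JJ ⁻¹' (closure Ω)ᶜ) :=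
    Disjoint.preimage _ (disjoint_compl_right.mono_left subset_closure)
  refine ⟨min s (min r₀ 1), ?_⟩
  refine ⟨hΩ.preimage JJ.continuous, isClosed_closure.isOpen_compl.preimage JJ.continuous, hdisj,
    by positivity, hα.1, hα.2, hr1, (min_le_right _ _).trans (min_le_right _ _),
    hsm _ hr1.le (min_le_left _ _), ?_⟩
  intro x hx r hr hrr
  have hxf := (mem_compl_iff_frontier hΩ x).1 hx
  have h1 := hε _ hxf r hr (hrr.trans ((min_le_right _ _).trans (min_le_left _ _)))
  have hsmr := hsm r hr.le (hrr.trans (min_le_left _ _))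
  set δ := C₀ * r ^ α with hδdef
  have hδ : 0 < δ := by positivity
  have hδ1 : δ ≤ 1 := by
    rw [mul_assoc, ← hδdef] at hsmr; linarith
  rw [carlesonEps, one_div, inv_mul_le_iff₀ hr] at h1
  have h2 := (abs_le.1 ((le_max_left _ _).trans h1)).2
  have h3 := (abs_le.1 ((le_max_right _ _).trans h1)).2
  obtain ⟨n, hn, hP⟩ := exists_normal Ω x hr hδ hδ1 (by linarith)
  obtain ⟨n', hn', hM⟩ := exists_normal (closure Ω)ᶜ x hr hδ hδ1 (by linarith)
  have hsum : ‖n + n'‖ ≤ 2 * δ := by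
    by_contra hc
    push Not at hc
    set S := ‖n + n'‖ with hS
    have hS0 : 0 < S := by linarith
    have q := nsq (n + n')
    have q1 := nsq n
    have q2 := nsq n'
    rw [hn] at q1
    rw [hn'] at q2
    rw [← hS] at q
    simp only [Complex.add_re, Complex.add_im] at q
    set v : ℂ := ((r / S : ℝ) : ℂ) * (n + n') with hv
    have hvn : ‖v‖ = r := by
      rw [hv, norm_mul, Complex.norm_real, Real.norm_eq_abs, abs_of_pos (by positivity), ← hS]
      field_simp
    have i1 : ip v n = r * S / 2 := by
      have : ip v n = (r / S) * (S ^ 2 / 2) := by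
        rw [hv, ip, Complex.re_ofReal_mul, Complex.im_ofReal_mul, Complex.add_re, Complex.add_im]
        linear_combination (r / S) * (1 / 2) * (-q - q1 + q2)
      rw [this]; field_simp
    have i2 : ip v n' = r * S / 2 := by
      have : ip v n' = (r / S) * (S ^ 2 / 2) := by
        rw [hv, ip, Complex.re_ofReal_mul, Complex.im_ofReal_mul, Complex.add_re, Complex.add_im]
        linear_combination (r / S) * (1 / 2) * (-q + q1 - q2)
      rw [this]; field_simp
    exact hdisj.le_bot ⟨hP v hvn (by rw [i1]; nlinarith), hM v hvn (by rw [i2]; nlinarith)⟩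
  have hK : 3 * C₀ * r ^ α * r = 3 * δ * r := by rw [hδdef]; ring
  refine ⟨n, hn, fun v hv => ?_⟩
  rw [hK]
  constructor
  · intro h
    exact hP v hv (by nlinarith)
  · intro h
    apply hM v hv
    have e : ip v n' = ip v (n + n') - ip v n := by simp [ip]; ring
    have b := (abs_le.1 (abs_ip_le v (n + n'))).1
    rw [hv] at b
    rw [e]
    nlinarith

/-- Quantitative decay `ε(x,r) ≤ C₀ r^α` of the Carleson ε-function implies that the boundary
`Γ` is a `C^{1,α/16}` one-dimensional submanifold of `ℝ²`: near each of its points, after an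
isometry of the plane (rotation and translation), `Γ` is the graph of a `C¹` function whose
derivative is `(α/16)`-Hölder continuous. -/
theorem main_theorem (Ωp : Set E2) (hΩ : IsJordanDomain Ωp)
    (Ωm : Set E2) (hΩm : Ωm = (closure Ωp)ᶜ)
    (Γ : Set E2) (hΓp : Γ = frontier Ωp) (hΓm : Γ = frontier Ωm)
    (α C₀ : ℝ) (hα : α ∈ Set.Ioo (0 : ℝ) 1) (hC₀ : 0 < C₀)
    (r₀ : ℝ) (hr₀ : 0 < r₀)
    (hε : ∀ x ∈ Γ, ∀ r : ℝ, 0 < r → r ≤ r₀ → carlesonEps Ωp x r ≤ C₀ * r ^ α) :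
    ∀ x ∈ Γ, ∃ U : Set E2, IsOpen U ∧ x ∈ U ∧
      ∃ (φ : E2 ≃ᵢ E2) (g : ℝ → ℝ) (a b : ℝ) (M : NNReal),
        a < b ∧ ContDiff ℝ 1 g ∧
        HolderWith M (Real.toNNReal (α / 16)) (deriv g) ∧
        Γ ∩ U = (fun t => φ ((EuclideanSpace.equiv (Fin 2) ℝ).symm ![t, g t])) '' Set.Ioo a b := by
  subst hΩm
  subst hΓp
  intro x hx
  have hopen := hΩ.1
  obtain ⟨r₁, had⟩ := adm_of Ωp hopen hα hC₀ hr₀ hε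
  set P := JJ ⁻¹' Ωp with hP
  set M := JJ ⁻¹' (closure Ωp)ᶜ with hM
  have hG : ∀ z, z ∉ P ∪ M ↔ JJ z ∈ frontier Ωp := mem_compl_iff_frontier hopen
  have hr1 := had.rpos
  have q1 : (2⁻¹ : ℝ) ^ α < 1 := Real.rpow_lt_one (by norm_num) (by norm_num) hα.1
  obtain ⟨B, hB⟩ : ∃ B, 16 * (3 * C₀) / (1 - 2⁻¹ ^ α) = B := ⟨_, rfl⟩
  have hB0 : 0 < B := by rw [← hB]; apply div_pos (by positivity) (by linarith)
  obtain ⟨s, hs, hsm⟩ := rpow_small hB0 hα.1 (by norm_num : (0:ℝ) < 1 / 20)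
  obtain ⟨R, hR, hR1, hRs⟩ : ∃ R : ℝ, 0 < R ∧ 4 * R ≤ r₁ ∧ 2 * R ≤ s := by
    refine ⟨min (r₁ / 4) (s / 2), by positivity, ?_, ?_⟩
    · linarith [min_le_left (r₁ / 4) (s / 2)]
    · linarith [min_le_right (r₁ / 4) (s / 2)]
  set z := JJ.symm x with hz
  have hzx : JJ z = x := JJ.apply_symm_apply x
  have hzG : z ∉ P ∪ M := (hG z).2 (by rw [hzx]; exact hx)
  obtain ⟨p, hp, hpz⟩ := had.exist hzG hR (by linarith)
  set e : ℂ := (p - z) / R with he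
  have hRc : (R : ℂ) ≠ 0 := by exact_mod_cast hR.ne'
  have he1 : ‖e‖ = 1 := by
    rw [he, norm_div, hpz, Complex.norm_real, Real.norm_eq_abs, abs_of_pos hR, div_self hR.ne']
  have heR : z + e * R = p := by rw [he]; field_simp; ring
  obtain ⟨U, g, ρ, N, hU, h0U, hρ, hg1, hg2, hset⟩ := (had.shift z e he1).graph hB hR hR1
    (hsm _ (by positivity) hRs) (by simpa using hzG) (by
      have : z + e * R ∉ P ∪ M := by rw [heR]; exact hp
      simpa using this)
  let c : Circle := ⟨e, mem_sphere_zero_iff_norm.2 he1⟩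
  let ψ : ℂ ≃ᵢ E2 :=
    ((rotation c).toIsometryEquiv.trans (IsometryEquiv.addLeft z)).trans JJ.toIsometryEquiv
  have hψ : ∀ y, ψ y = JJ (z + e * y) := fun y => rfl
  refine ⟨ψ '' U, ψ.toHomeomorph.isOpenMap U hU, ⟨0, h0U, by rw [hψ]; simpa using hzx⟩,
    JJ.symm.toIsometryEquiv.trans ψ, g, -ρ, ρ, N, by linarith, hg1, hg2, ?_⟩
  have hpre : ψ ⁻¹' (frontier Ωp) = {y | y ∉ ((fun y => z + e * y) ⁻¹' P) ∪ ((fun y => z + e * y) ⁻¹' M)} := by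
    ext y
    have := hG (z + e * y)
    simp only [mem_preimage, hψ, mem_ofPred_eq]
    rw [← this]
    rfl
  rw [inter_comm, ← image_inter_preimage, hpre, inter_comm, hset, image_image]
  apply image_congr
  intro t _
  rw [JJ_mk]
  simp

end
end

section
/- Let Ω⁺ ⊂ ℝ² be a Jordan domain, Ω⁻ = ℝ² \ closure(Ω⁺), and Γ = ∂Ω⁺ = ∂Ω⁻. Fix α ∈ (0,1) and C₀ > 0, and suppose there exists r₀ > 0 such that ε(x,r) ≤ C₀·r^α for all x ∈ Γ and all 0 < r ≤ r₀. Set C₁ = 2C₀ + 2C₀². Then there exists ρ₀ ≤ r₀ such that for every x₀ ∈ Γ, every 0 < s₀ ≤ ρ₀, and every y ∈ ∂B(x₀,s₀) ∩ Γ, for each k ∈ ℕ there exists a collection of points {z_k^j}_{j=0}^{2^k} ⊂ Γ with z_k^0 = x₀ and z_k^{2^k} = y, such that: (a) for j even, z_k^j = z_{k−1}^{j/2}; (b) for each odd j with 1 ≤ j ≤ 2^k − 1, the triangle with vertices z_k^{j−1}, z_k^j, z_k^{j+1} is isosceles with |z_k^{j−1} − z_k^j| = |z_k^{j+1} − z_k^j|,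 and both ||z_k^{j−1} − z_k^j| − |z_k^{j−1} − z_k^{j+1}|/2| < C₀²·|z_k^{j−1} − z_k^{j+1}|^{α+1} and ||z_k^{j+1} − z_k^j| − |z_k^{j−1} − z_k^{j+1}|/2| < C₀²·|z_k^{j−1} − z_k^{j+1}|^{α+1}; (c) the two base angles of this triangle (the angle at z_k^{j−1} between the segments [z_k^{j−1}, z_k^{j+1}] and [z_k^{j−1}, z_k^j], and the angle at z_k^{j+1} between [z_k^{j−1}, z_k^{j+1}] and [z_k^{j+1}, z_k^j]) are equal and each is less than C₁·|z_k^{j−1} − z_k^{j+1}|^{α/2}; (d) |z_k^j − (z_k^{j−1} + z_k^{j+1})/2| < C₀·|z_k^{j−1} − z_k^{j+1}|^{α/2 + 1}. -/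
open Set Metric MeasureTheory

noncomputable section

lemma circlePt_apply_zero (x : E2) (r t : ℝ) : circlePt x r t 0 = x 0 + r * Real.cos t := by
  simp [circlePt]

lemma circlePt_apply_one (x : E2) (r t : ℝ) : circlePt x r t 1 = x 1 + r * Real.sin t := by
  simp [circlePt]

lemma E2_ext {x y : E2} (h0 : x 0 = y 0) (h1 : x 1 = y 1) : x = y := by
  ext i
  fin_cases i
  · exact h0
  · exact h1

lemma E2_dist_sq (x y : E2) : dist x y ^ 2 = (x 0 - y 0) ^ 2 + (x 1 - y 1) ^ 2 := by
  rw [EuclideanSpace.dist_eq, Real.sq_sqrt (by positivity)]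
  simp [Fin.sum_univ_two, Real.dist_eq, sq_abs]

lemma circlePt_add_int (x : E2) (r t : ℝ) (n : ℤ) :
    circlePt x r (t + n * (2 * Real.pi)) = circlePt x r t := by
  apply E2_ext
  · rw [circlePt_apply_zero, circlePt_apply_zero, Real.cos_add_int_mul_two_pi]
  · rw [circlePt_apply_one, circlePt_apply_one, Real.sin_add_int_mul_two_pi]

lemma exists_circlePt {x y : E2} : ∃ t : ℝ, y = circlePt x (dist y x) t := by
  set w : ℂ := ⟨y 0 - x 0, y 1 - x 1⟩ with hw
  have hn : ‖w‖ = dist y x := by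
    rw [← sq_eq_sq₀ (norm_nonneg _) dist_nonneg, E2_dist_sq, Complex.sq_norm, Complex.normSq_apply]
    simp only [hw]
    ring
  refine ⟨w.arg, E2_ext ?_ ?_⟩
  · rw [circlePt_apply_zero, ← hn, Complex.norm_mul_cos_arg]
    simp [hw]
  · rw [circlePt_apply_one, ← hn, Complex.norm_mul_sin_arg]
    simp [hw]

lemma circlePt_dist_le (x : E2) {r : ℝ} (hr : 0 ≤ r) (s t : ℝ) :
    dist (circlePt x r s) (circlePt x r t) ≤ r * dist s t := by
  apply (sq_le_sq₀ dist_nonneg (by positivity)).1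
  rw [E2_dist_sq, circlePt_apply_zero, circlePt_apply_zero, circlePt_apply_one,
    circlePt_apply_one, mul_pow, Real.dist_eq, sq_abs]
  have h1 := @Real.one_sub_sq_div_two_le_cos (s - t)
  rw [Real.cos_sub] at h1
  have h2 := Real.cos_sq_add_sin_sq s
  have h3 := Real.cos_sq_add_sin_sq t
  have : (x 0 + r * Real.cos s - (x 0 + r * Real.cos t)) ^ 2
    + (x 1 + r * Real.sin s - (x 1 + r * Real.sin t)) ^ 2
    = r ^ 2 * (2 - 2 * (Real.cos s * Real.cos t + Real.sin s * Real.sin t)) := by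
    linear_combination r ^ 2 * h2 + r ^ 2 * h3
  rw [this]
  apply mul_le_mul_of_nonneg_left _ (sq_nonneg r)
  linarith

lemma arc_measure_le (x : E2) {r : ℝ} (hr : 0 ≤ r) (a b : ℝ) :
    μH[1] (circlePt x r '' Set.Ioo a b) ≤ ENNReal.ofReal (r * (b - a)) := by
  have hL : LipschitzWith r.toNNReal (circlePt x r) := by
    apply LipschitzWith.of_dist_le_mul
    intro s t
    rw [Real.coe_toNNReal _ hr]
    exact circlePt_dist_le x hr s t
  have := (hL.lipschitzOnWith (s := Set.Ioo a b)).hausdorffMeasure_image_le (d := 1) zero_le_one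
  rw [hausdorffMeasure_real, Real.volume_Ioo, ENNReal.rpow_one] at this
  rw [ENNReal.ofReal_mul hr]
  exact this

lemma exists_arc {Ω : Set E2} {x : E2} {r e : ℝ} (hr : 0 < r) (he : 0 < e) (he' : 2 * e < 1)
    (h : |Real.pi * r - maxArcMeasure Ω x r| ≤ e * r) :
    ∃ a b : ℝ, b - a ≤ 2 * Real.pi ∧ Real.pi - 2 * e ≤ b - a ∧
      ∀ t ∈ Set.Ioo a b, circlePt x r t ∈ Ω := by
  have hpi := Real.pi_gt_three
  have h1 := (abs_le.1 h).2
  set c : ℝ := r * (Real.pi - 2 * e) with hc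
  have hc0 : 0 ≤ c := by
    apply mul_nonneg hr.le
    linarith
  have h2 : c < maxArcMeasure Ω x r := by
    have : 0 < r * e := by positivity
    rw [hc]
    linarith
  unfold maxArcMeasure at h2
  have h3 : (⨆ A ∈ {A | IsOpenArc x r A ∧ A ⊆ Ω}, μH[1] A) ≠ ⊤ := by
    intro h
    rw [h] at h2
    simp at h2
    linarith
  rw [← ENNReal.ofReal_lt_iff_lt_toReal hc0 h3] at h2
  simp only [lt_iSup_iff] at h2
  obtain ⟨A, ⟨⟨a, b, hab, hab', rfl⟩, hA⟩, h4⟩ := h2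
  have h5 := h4.trans_le (arc_measure_le x hr.le a b)
  have h6 := (ENNReal.ofReal_lt_ofReal_iff_of_nonneg hc0).1 h5
  refine ⟨a, b, hab', ?_, fun t ht => hA ⟨t, ht, rfl⟩⟩
  exact (lt_of_mul_lt_mul_left h6 hr.le).le

/-- Normalising an arc that avoids the parameter `t`. -/
lemma exists_arc_norm {Ω : Set E2} {x : E2} {r e t : ℝ}
    (ht : circlePt x r t ∉ Ω)
    (h : ∃ a b : ℝ, b - a ≤ 2 * Real.pi ∧ Real.pi - 2 * e ≤ b - a ∧
      ∀ t ∈ Set.Ioo a b, circlePt x r t ∈ Ω) :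
    ∃ a b : ℝ, t ≤ a ∧ b ≤ t + 2 * Real.pi ∧ Real.pi - 2 * e ≤ b - a ∧
      ∀ t ∈ Set.Ioo a b, circlePt x r t ∈ Ω := by
  obtain ⟨a, b, hab, hab', hA⟩ := h
  have hpi := Real.pi_gt_three
  have hp : (0 : ℝ) < 2 * Real.pi := by linarith
  set n := toIcoDiv hp t a with hn
  have hm := toIcoMod_mem_Ico hp t a
  rw [← self_sub_toIcoDiv_zsmul, ← hn, zsmul_eq_mul] at hm
  have hA' : ∀ u ∈ Set.Ioo (a - n * (2 * Real.pi)) (b - n * (2 * Real.pi)),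
      circlePt x r u ∈ Ω := by
    intro u hu
    rw [← circlePt_add_int x r u n]
    apply hA
    constructor
    · linarith [hu.1]
    · linarith [hu.2]
  refine ⟨_, _, hm.1, ?_, by linarith, hA'⟩
  by_contra hcon
  push Not at hcon
  apply ht
  have := hA' (t + 2 * Real.pi) ⟨hm.2, hcon⟩
  have h2 := circlePt_add_int x r t 1
  simp only [Int.cast_one, one_mul] at h2
  rwa [h2] at this

/-- If `circlePt x r t` lies on neither side, points at angles `±u` are on opposite sides. -/
lemma opposite_sides {Ω Ω' : Set E2} {x : E2} {r e t : ℝ} (he : 0 < e) (he' : 4 * e < 1)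
    (hdisj : ∀ p, p ∈ Ω → p ∈ Ω' → False)
    (ht : circlePt x r t ∉ Ω) (ht' : circlePt x r t ∉ Ω')
    (h : ∃ a b : ℝ, b - a ≤ 2 * Real.pi ∧ Real.pi - 2 * e ≤ b - a ∧
      ∀ t ∈ Set.Ioo a b, circlePt x r t ∈ Ω)
    (h' : ∃ a b : ℝ, b - a ≤ 2 * Real.pi ∧ Real.pi - 2 * e ≤ b - a ∧
      ∀ t ∈ Set.Ioo a b, circlePt x r t ∈ Ω')
    {u : ℝ} (hu : 4 * e < u) (hu' : u < Real.pi - 4 * e) :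
    (circlePt x r (t + u) ∈ Ω ∧ circlePt x r (t - u) ∈ Ω') ∨
    (circlePt x r (t + u) ∈ Ω' ∧ circlePt x r (t - u) ∈ Ω) := by
  have hpi := Real.pi_gt_three
  obtain ⟨a, b, ha, hb, hab, hA⟩ := exists_arc_norm ht h
  obtain ⟨c, d, hc, hd, hcd, hC⟩ := exists_arc_norm ht' h'
  have h2 := circlePt_add_int x r (t - u) 1
  simp only [Int.cast_one, one_mul] at h2
  rw [← h2]
  have key : b ≤ c ∨ d ≤ a := by
    by_contra hcon
    push Not at hcon
    have hlt : max a c < min b d := by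
      simp only [max_lt_iff, lt_min_iff]
      refine ⟨⟨by linarith, hcon.1⟩, ⟨hcon.2, by linarith⟩⟩
    obtain ⟨v, hv1, hv2⟩ := exists_between hlt
    simp only [max_lt_iff, lt_min_iff] at hv1 hv2
    exact hdisj _ (hA v ⟨hv1.1, hv2.1⟩) (hC v ⟨hv1.2, hv2.2⟩)
  rcases key with k | k
  · left
    exact ⟨hA _ ⟨by linarith, by linarith⟩, hC _ ⟨by linarith, by linarith⟩⟩
  · right
    exact ⟨hC _ ⟨by linarith, by linarith⟩, hA _ ⟨by linarith, by linarith⟩⟩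

/-- The point `(x+y)/2 + l J(y-x)` on the perpendicular bisector. -/
def bisPt (x y : E2) (l : ℝ) : E2 :=
  !₂[(x 0 + y 0) / 2 - l * (y 1 - x 1), (x 1 + y 1) / 2 + l * (y 0 - x 0)]

lemma bisPt_zero (x y : E2) (l : ℝ) :
    bisPt x y l 0 = (x 0 + y 0) / 2 - l * (y 1 - x 1) := by simp [bisPt]

lemma bisPt_one (x y : E2) (l : ℝ) :
    bisPt x y l 1 = (x 1 + y 1) / 2 + l * (y 0 - x 0) := by simp [bisPt]

lemma bisPt_swap (x y : E2) (l : ℝ) : bisPt y x (-l) = bisPt x y l := by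
  apply E2_ext
  · rw [bisPt_zero, bisPt_zero]; ring
  · rw [bisPt_one, bisPt_one]; ring

lemma bisPt_dist_sq (x y : E2) (l : ℝ) :
    dist x (bisPt x y l) ^ 2 = dist x y ^ 2 * (1 / 4 + l ^ 2) := by
  rw [E2_dist_sq, E2_dist_sq, bisPt_zero, bisPt_one]
  ring

lemma bisPt_dist (x y : E2) (l : ℝ) :
    dist x (bisPt x y l) = dist x y * √(1 / 4 + l ^ 2) := by
  rw [← sq_eq_sq₀ dist_nonneg (by positivity), bisPt_dist_sq, mul_pow,
    Real.sq_sqrt (by positivity)]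

lemma bisPt_dist' (x y : E2) (l : ℝ) :
    dist y (bisPt x y l) = dist x y * √(1 / 4 + l ^ 2) := by
  rw [← bisPt_swap, bisPt_dist, dist_comm, neg_sq]

lemma bisPt_dist_mid (x y : E2) (l : ℝ) :
    dist (bisPt x y l) (midpoint ℝ x y) = |l| * dist x y := by
  rw [← sq_eq_sq₀ dist_nonneg (by positivity), E2_dist_sq, mul_pow, sq_abs, E2_dist_sq,
    bisPt_zero, bisPt_one]
  simp [midpoint_eq_smul_add]
  ring

lemma arctan_le_self' {x : ℝ} (hx : 0 ≤ x) : Real.arctan x ≤ x := by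
  have := Real.le_tan (Real.arctan_nonneg.2 hx) (Real.arctan_lt_pi_div_two x)
  rwa [Real.tan_arctan] at this

lemma bisPt_angle {x y : E2} (hxy : 0 < dist x y) (l : ℝ) :
    InnerProductGeometry.angle (y - x) (bisPt x y l - x) = Real.arctan (2 * |l|) := by
  set v : E2 := (1 / 2 : ℝ) • (y - x) with hv
  set w : E2 := bisPt x y l - midpoint ℝ x y with hw
  have hvw : bisPt x y l - x = v + w := by
    rw [hv, hw, midpoint_eq_smul_add, invOf_eq_inv]
    module
  have hang : InnerProductGeometry.angle (y - x) (bisPt x y l - x)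
      = InnerProductGeometry.angle v (v + w) := by
    rw [hvw, hv, InnerProductGeometry.angle_smul_left_of_pos _ _ (by norm_num)]
  have hnw : ‖w‖ = |l| * dist x y := by
    rw [hw, ← dist_eq_norm, bisPt_dist_mid]
  have hnv : ‖v‖ = 1 / 2 * dist x y := by
    rw [hv, norm_smul, ← dist_eq_norm, dist_comm]
    simp
  have hv0 : v ≠ 0 := by
    rw [← norm_pos_iff, hnv]; positivity
  have hin : inner ℝ v w = 0 := by
    rw [hv, hw]
    simp [EuclideanSpace.inner_eq_star_dotProduct, dotProduct, Fin.sum_univ_two, bisPt_zero,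
      bisPt_one, midpoint_eq_smul_add]
    ring
  rw [hang, InnerProductGeometry.angle_add_eq_arctan_of_inner_eq_zero hin hv0, hnw, hnv]
  congr 1
  field_simp

lemma bisPt_angle' {x y : E2} (hxy : 0 < dist x y) (l : ℝ) :
    InnerProductGeometry.angle (x - y) (bisPt x y l - y) = Real.arctan (2 * |l|) := by
  rw [← bisPt_swap, bisPt_angle (by rwa [dist_comm]), abs_neg]

/-- The conclusions of the half-scales lemma. -/
def HalfConcl (C₀ α : ℝ) (x y z : E2) : Prop :=
  dist x z = dist y z ∧
  |dist x z - dist x y / 2| < C₀ ^ 2 * dist x y ^ (α + 1) ∧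
  |dist y z - dist x y / 2| < C₀ ^ 2 * dist x y ^ (α + 1) ∧
  InnerProductGeometry.angle (y - x) (z - x) = InnerProductGeometry.angle (x - y) (z - y) ∧
  InnerProductGeometry.angle (y - x) (z - x) < (2 * C₀ + 2 * C₀ ^ 2) * dist x y ^ (α / 2) ∧
  dist z (midpoint ℝ x y) < C₀ * dist x y ^ (α / 2 + 1)

lemma half_geom {C₀ α : ℝ} (hC₀ : 0 < C₀) {x y : E2} (hxy : 0 < dist x y) {l : ℝ}
    (hl : |l| < C₀ * dist x y ^ (α / 2)) : HalfConcl C₀ α x y (bisPt x y l) := by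
  set s := dist x y with hs
  have hp : 0 < s ^ (α / 2) := Real.rpow_pos_of_pos hxy _
  have hpp : s ^ (α + 1) = s ^ (α / 2) * s ^ (α / 2) * s := by
    rw [← Real.rpow_add hxy, Real.rpow_add_one hxy.ne']
    congr 2
    ring
  have hpp' : s ^ (α / 2 + 1) = s ^ (α / 2) * s := Real.rpow_add_one hxy.ne' _
  have hl2 : l ^ 2 < C₀ ^ 2 * (s ^ (α / 2) * s ^ (α / 2)) := by
    have := (sq_lt_sq₀ (abs_nonneg l) (by positivity)).2 hl
    rw [sq_abs] at this
    linarith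
  have hb : |s * √(1 / 4 + l ^ 2) - s / 2| < C₀ ^ 2 * s ^ (α + 1) := by
    have h1 : √(1 / 4 + l ^ 2) ≤ 1 / 2 + l ^ 2 := by
      apply Real.sqrt_le_iff.2
      constructor
      · positivity
      · nlinarith [sq_nonneg (l ^ 2)]
    have h2 : 1 / 2 ≤ √(1 / 4 + l ^ 2) := by
      apply Real.le_sqrt_of_sq_le
      nlinarith [sq_nonneg l]
    rw [hpp, abs_of_nonneg (by nlinarith)]
    nlinarith
  have hd : dist x (bisPt x y l) = s * √(1 / 4 + l ^ 2) := bisPt_dist x y l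
  have hd' : dist y (bisPt x y l) = s * √(1 / 4 + l ^ 2) := bisPt_dist' x y l
  refine ⟨by rw [hd, hd'], by rwa [hd], by rwa [hd'], ?_, ?_, ?_⟩
  · rw [bisPt_angle hxy, bisPt_angle' hxy]
  · rw [bisPt_angle hxy]
    have := arctan_le_self' (x := 2 * |l|) (by positivity)
    have h3 : 0 < C₀ ^ 2 * s ^ (α / 2) := by positivity
    nlinarith
  · rw [bisPt_dist_mid, ← hs, hpp']
    nlinarith

/-- The half-scales lemma. -/
lemma half_scale {Ω : Set E2} (hΩ : IsOpen Ω) {e : ℝ → ℝ} {x y : E2} {E : ℝ}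
    (hx : x ∈ frontier Ω) (hy : y ∈ frontier Ω) (hxy : 0 < dist x y) (hE : 4 * E < 1)
    (h : ∀ p ∈ frontier Ω, ∀ r, 0 < r → r ≤ dist x y → 0 < e r ∧ e r ≤ E ∧
      (∃ a b : ℝ, b - a ≤ 2 * Real.pi ∧ Real.pi - 2 * e r ≤ b - a ∧
        ∀ t ∈ Set.Ioo a b, circlePt p r t ∈ Ω) ∧
      (∃ a b : ℝ, b - a ≤ 2 * Real.pi ∧ Real.pi - 2 * e r ≤ b - a ∧
        ∀ t ∈ Set.Ioo a b, circlePt p r t ∈ (closure Ω)ᶜ)) :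
    ∃ l : ℝ, bisPt x y l ∈ frontier Ω ∧ |l| ≤ 4 * E ∧
      dist x (bisPt x y l) ≤ dist x y := by
  have hpi := Real.pi_gt_three
  have hf : ∀ p ∈ frontier Ω, p ∉ Ω ∧ p ∉ (closure Ω)ᶜ := by
    intro p hp
    rw [hΩ.frontier_eq] at hp
    exact ⟨hp.2, fun h => h hp.1⟩
  have hdisj : ∀ p, p ∈ Ω → p ∈ (closure Ω)ᶜ → False := fun p h1 h2 => h2 (subset_closure h1)
  set s := dist x y with hs
  obtain ⟨l, hl, hlf⟩ : ∃ l : ℝ, l ^ 2 ≤ 3 / 4 ∧ bisPt x y l ∈ frontier Ω := by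
    obtain ⟨t, ht⟩ := exists_circlePt (x := x) (y := y)
    rw [dist_comm, ← hs] at ht
    obtain ⟨h1, h2, h3, h4⟩ := h x hx s hxy le_rfl
    have hop := opposite_sides (t := t) (r := s) (x := x) (u := Real.pi / 3) h1 (by linarith) hdisj
      (by rw [← ht]; exact (hf y hy).1) (by rw [← ht]; exact (hf y hy).2) h3 h4
      (by linarith) (by linarith)
    have hy0 : y 0 = x 0 + s * Real.cos t := by
      rw [← circlePt_apply_zero, ← ht]
    have hy1 : y 1 = x 1 + s * Real.sin t := by
      rw [← circlePt_apply_one, ← ht]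
    have e1 : circlePt x s (t + Real.pi / 3) = bisPt x y (√3 / 2) := by
      apply E2_ext
      · rw [circlePt_apply_zero, bisPt_zero, hy0, hy1, Real.cos_add, Real.cos_pi_div_three,
          Real.sin_pi_div_three]
        ring
      · rw [circlePt_apply_one, bisPt_one, hy0, hy1, Real.sin_add, Real.cos_pi_div_three,
          Real.sin_pi_div_three]
        ring
    have e2 : circlePt x s (t - Real.pi / 3) = bisPt x y (-(√3 / 2)) := by
      apply E2_ext
      · rw [circlePt_apply_zero, bisPt_zero, hy0, hy1, Real.cos_sub, Real.cos_pi_div_three,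
          Real.sin_pi_div_three]
        ring
      · rw [circlePt_apply_one, bisPt_one, hy0, hy1, Real.sin_sub, Real.cos_pi_div_three,
          Real.sin_pi_div_three]
        ring
    rw [e1, e2] at hop
    have hcont : Continuous (bisPt x y) := by
      unfold bisPt
      fun_prop
    by_contra hcon
    push Not at hcon
    set S := bisPt x y '' Set.Icc (-(√3 / 2)) (√3 / 2) with hS
    have hSc : IsPreconnected S := isPreconnected_Icc.image _ hcont.continuousOn
    have hs3 : √3 ^ 2 = 3 := Real.sq_sqrt (by norm_num)
    have hs30 : 0 ≤ √3 := Real.sqrt_nonneg 3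
    have hcov : S ⊆ Ω ∪ (closure Ω)ᶜ := by
      rintro _ ⟨l, hl, rfl⟩
      have := hcon l (by nlinarith [hl.1, hl.2])
      rw [hΩ.frontier_eq] at this
      by_cases h5 : bisPt x y l ∈ Ω
      · left; exact h5
      · right; intro h6; exact this ⟨h6, h5⟩
    have hm1 : bisPt x y (√3 / 2) ∈ S := ⟨_, ⟨by linarith, le_rfl⟩, rfl⟩
    have hm2 : bisPt x y (-(√3 / 2)) ∈ S := ⟨_, ⟨le_rfl, by linarith⟩, rfl⟩
    have hne : (S ∩ Ω).Nonempty ∧ (S ∩ (closure Ω)ᶜ).Nonempty := by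
      rcases hop with ⟨o1, o2⟩ | ⟨o1, o2⟩
      · exact ⟨⟨_, hm1, o1⟩, ⟨_, hm2, o2⟩⟩
      · exact ⟨⟨_, hm2, o2⟩, ⟨_, hm1, o1⟩⟩
    obtain ⟨p, -, hp1, hp2⟩ := hSc Ω (closure Ω)ᶜ hΩ isClosed_closure.isOpen_compl hcov
      hne.1 hne.2
    exact hdisj p hp1 hp2
  set z := bisPt x y l with hz
  have hsq : dist x z ^ 2 = s ^ 2 * (1 / 4 + l ^ 2) := bisPt_dist_sq x y l
  have hρ : dist x z ≤ s := by
    apply (sq_le_sq₀ dist_nonneg hxy.le).1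
    rw [hsq]
    nlinarith [sq_nonneg s]
  have hρ0 : 0 < dist x z := by
    rw [hz, bisPt_dist, ← hs]
    positivity
  refine ⟨l, hlf, ?_, hρ⟩
  set ρ := dist x z with hρd
  have hyz : dist y z = ρ := by
    rw [hρd, hz, bisPt_dist', bisPt_dist]
  obtain ⟨t₁, ht₁⟩ := exists_circlePt (x := z) (y := x)
  obtain ⟨t₂', ht₂'⟩ := exists_circlePt (x := z) (y := y)
  rw [← hρd] at ht₁
  rw [hyz] at ht₂'
  obtain ⟨t₂, ht₂, hlo, hhi⟩ : ∃ t₂, y = circlePt z ρ t₂ ∧ t₁ - Real.pi ≤ t₂ ∧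
      t₂ ≤ t₁ + Real.pi := by
    have hp : (0 : ℝ) < 2 * Real.pi := by linarith
    have hm := toIcoMod_mem_Ico hp (t₁ - Real.pi) t₂'
    rw [← self_sub_toIcoDiv_zsmul, zsmul_eq_mul] at hm
    refine ⟨_, ?_, hm.1, by linarith [hm.2]⟩
    rw [← circlePt_add_int _ _ _ (toIcoDiv hp (t₁ - Real.pi) t₂')]
    simpa using ht₂'
  have hcos : s ^ 2 * (l ^ 2 - 1 / 4) = ρ ^ 2 * Real.cos (t₂ - t₁) := by
    have a0 : x 0 = z 0 + ρ * Real.cos t₁ := by rw [← circlePt_apply_zero, ← ht₁]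
    have a1 : x 1 = z 1 + ρ * Real.sin t₁ := by rw [← circlePt_apply_one, ← ht₁]
    have b0 : y 0 = z 0 + ρ * Real.cos t₂ := by rw [← circlePt_apply_zero, ← ht₂]
    have b1 : y 1 = z 1 + ρ * Real.sin t₂ := by rw [← circlePt_apply_one, ← ht₂]
    have c0 : z 0 = (x 0 + y 0) / 2 - l * (y 1 - x 1) := bisPt_zero x y l
    have c1 : z 1 = (x 1 + y 1) / 2 + l * (y 0 - x 0) := bisPt_one x y l
    have d0 : s ^ 2 = (x 0 - y 0) ^ 2 + (x 1 - y 1) ^ 2 := E2_dist_sq x y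
    have f : ρ ^ 2 * Real.cos (t₂ - t₁) =
        (x 0 - z 0) * (y 0 - z 0) + (x 1 - z 1) * (y 1 - z 1) := by
      rw [a0, a1, b0, b1, Real.cos_sub]
      ring
    rw [f, d0, c0, c1]
    ring
  rw [hsq] at hcos
  have hs2 : 0 < s ^ 2 := by positivity
  have hcos' : l ^ 2 - 1 / 4 = (1 / 4 + l ^ 2) * Real.cos (t₂ - t₁) := by
    apply mul_left_cancel₀ hs2.ne'
    rw [hcos]; ring
  obtain ⟨h1, h2, h3, h4⟩ := h z hlf ρ hρ0 hρ
  set u := |t₂ - t₁| with hu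
  have hcu : Real.cos (t₂ - t₁) = Real.cos u := by rw [hu, Real.cos_abs]
  rw [hcu] at hcos'
  have hule : u ≤ Real.pi := by
    rw [hu, abs_le]
    constructor <;> linarith
  have hu1 : 4 * e ρ < u := by
    by_contra hcon
    push Not at hcon
    have hu0 : 0 ≤ u := abs_nonneg _
    have hu2 := @Real.one_sub_sq_div_two_le_cos u
    have hu3 : u < 1 := by linarith
    have hu4 : 1 / 2 < Real.cos u := by nlinarith
    nlinarith [sq_nonneg l]
  have hu2 : Real.pi - 4 * e ρ ≤ u := by
    by_contra hcon
    push Not at hcon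
    have hop := opposite_sides (t := t₁) (r := ρ) (x := z) (u := u) h1 (by linarith) hdisj
      (by rw [← ht₁]; exact (hf x hx).1) (by rw [← ht₁]; exact (hf x hx).2) h3 h4 hu1 hcon
    have hyu : y = circlePt z ρ (t₁ + u) ∨ y = circlePt z ρ (t₁ - u) := by
      rcases abs_choice (t₂ - t₁) with hc | hc
      · left
        rw [hu, hc, ht₂]; congr 1; ring
      · right
        rw [hu, hc, ht₂]; congr 1; ring
    obtain ⟨g1, g2⟩ := hf y hy
    rcases hyu with hyu | hyu <;> rw [← hyu] at hop <;> tauto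
  have hcle : Real.cos u ≤ -1 + (4 * e ρ) ^ 2 / 2 := by
    have k1 := @Real.one_sub_sq_div_two_le_cos (Real.pi - u)
    rw [Real.cos_pi_sub] at k1
    have k2 : (Real.pi - u) ^ 2 ≤ (4 * e ρ) ^ 2 := by
      apply pow_le_pow_left₀ <;> linarith
    linarith
  have hfin : l ^ 2 ≤ (4 * e ρ) ^ 2 := by
    have k : (1 / 4 + l ^ 2) * Real.cos u ≤ (1 / 4 + l ^ 2) * (-1 + (4 * e ρ) ^ 2 / 2) :=
      mul_le_mul_of_nonneg_left hcle (by positivity)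
    nlinarith [sq_nonneg (4 * e ρ)]
  have := abs_le_of_sq_le_sq hfin (by linarith)
  linarith

lemma exists_small {α C₀ : ℝ} (hα : 0 < α) (hC₀ : 0 < C₀) :
    ∃ ρ : ℝ, 0 < ρ ∧ ∀ s, 0 < s → s ≤ ρ →
      4 * (C₀ * s ^ α) < 1 ∧ 4 * (C₀ * s ^ α) < C₀ * s ^ (α / 2) := by
  have hc : ContinuousAt (fun s : ℝ => s ^ (α / 2)) 0 :=
    Real.continuousAt_rpow_const _ _ (Or.inr (by linarith))
  have hm : (0 : ℝ) < min (1 / 4) (1 / C₀) := by positivity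
  obtain ⟨d, hd, h⟩ := Metric.continuousAt_iff.1 hc _ hm
  refine ⟨d / 2, by positivity, fun s hs hsd => ?_⟩
  have h1 := h (x := s) (by rw [Real.dist_eq, sub_zero, abs_of_pos hs]; linarith)
  have hp : 0 < s ^ (α / 2) := Real.rpow_pos_of_pos hs _
  rw [Real.zero_rpow (by linarith), Real.dist_eq, sub_zero, abs_of_pos hp, lt_min_iff] at h1
  have hpp : s ^ α = s ^ (α / 2) * s ^ (α / 2) := by
    rw [← Real.rpow_add hs]
    congr 1
    ring
  have h2 : C₀ * s ^ (α / 2) < 1 := by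
    have := mul_lt_mul_of_pos_left h1.2 hC₀
    rwa [mul_one_div_cancel hC₀.ne'] at this
  have h3 : 0 < C₀ * s ^ (α / 2) := by positivity
  rw [hpp]
  constructor
  · nlinarith [h1.1]
  · nlinarith [h1.1]

/-- Lemma 3.2: iterating the Half-Scales Lemma produces, for each `k`, a collection
`{z_k^j}_{j=0}^{2^k} ⊂ Γ` of points, compatible between generations, forming controlled
isosceles triangles, with `C₁ = 2C₀ + 2C₀²`. -/
theorem iterated_half_scales (Ωp : Set E2) (hΩ : IsJordanDomain Ωp)
    (Ωm : Set E2) (hΩm : Ωm = (closure Ωp)ᶜ)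
    (Γ : Set E2) (hΓp : Γ = frontier Ωp) (hΓm : Γ = frontier Ωm)
    (α C₀ : ℝ) (hα : α ∈ Set.Ioo (0 : ℝ) 1) (hC₀ : 0 < C₀)
    (r₀ : ℝ) (hr₀ : 0 < r₀)
    (hε : ∀ x ∈ Γ, ∀ r : ℝ, 0 < r → r ≤ r₀ → carlesonEps Ωp x r ≤ C₀ * r ^ α) :
    ∃ ρ₀ : ℝ, 0 < ρ₀ ∧ ρ₀ ≤ r₀ ∧
      ∀ x₀ ∈ Γ, ∀ s₀ : ℝ, 0 < s₀ → s₀ ≤ ρ₀ →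
        ∀ y ∈ Metric.sphere x₀ s₀ ∩ Γ,
          ∃ z : ℕ → ℕ → E2, ∀ k : ℕ,
            z k 0 = x₀ ∧ z k (2 ^ k) = y ∧
            (∀ j ≤ 2 ^ k, z k j ∈ Γ) ∧
            -- (a) points of even index come from the previous generation
            (∀ j ≤ 2 ^ k, Even j → 1 ≤ k → z k j = z (k - 1) (j / 2)) ∧
            (∀ j, Odd j → j ≤ 2 ^ k - 1 →
              -- (b) the triangle `z_k^{j-1} z_k^j z_k^{j+1}` is isosceles ...
              dist (z k (j - 1)) (z k j) = dist (z k (j + 1)) (z k j) ∧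
              |dist (z k (j - 1)) (z k j) - dist (z k (j - 1)) (z k (j + 1)) / 2|
                < C₀ ^ 2 * dist (z k (j - 1)) (z k (j + 1)) ^ (α + 1) ∧
              |dist (z k (j + 1)) (z k j) - dist (z k (j - 1)) (z k (j + 1)) / 2|
                < C₀ ^ 2 * dist (z k (j - 1)) (z k (j + 1)) ^ (α + 1) ∧
              -- (c) with equal, small base angles ...
              InnerProductGeometry.angle (z k (j + 1) - z k (j - 1)) (z k j - z k (j - 1))
                = InnerProductGeometry.angle (z k (j - 1) - z k (j + 1)) (z k j - z k (j + 1)) ∧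
              InnerProductGeometry.angle (z k (j + 1) - z k (j - 1)) (z k j - z k (j - 1))
                < (2 * C₀ + 2 * C₀ ^ 2) * dist (z k (j - 1)) (z k (j + 1)) ^ (α / 2) ∧
              -- (d) and apex close to the midpoint of the base
              dist (z k j) (midpoint ℝ (z k (j - 1)) (z k (j + 1)))
                < C₀ * dist (z k (j - 1)) (z k (j + 1)) ^ (α / 2 + 1)) := by
  subst hΓp
  obtain ⟨hα0, hα1⟩ := hα
  have hopen := hΩ.1
  obtain ⟨ρ₁, hρ₁, hsmall⟩ := exists_small hα0 hC₀
  set ρ₀ := min r₀ ρ₁ with hρ₀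
  have hρ₀pos : 0 < ρ₀ := lt_min hr₀ hρ₁
  refine ⟨ρ₀, hρ₀pos, min_le_left _ _, ?_⟩
  have hhalf : ∀ x y : E2, x ∈ frontier Ωp → y ∈ frontier Ωp → 0 < dist x y → dist x y ≤ ρ₀ →
      ∃ z : E2, z ∈ frontier Ωp ∧ 0 < dist x z ∧ dist x z ≤ ρ₀ ∧ HalfConcl C₀ α x y z := by
    intro x y hx hy hxy hxyρ
    have hsr : dist x y ≤ r₀ := hxyρ.trans (min_le_left _ _)
    obtain ⟨hs1, hs2⟩ := hsmall _ hxy (hxyρ.trans (min_le_right _ _))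
    obtain ⟨l, hl, hl1, hl2⟩ := half_scale (e := fun r => C₀ * r ^ α) (E := C₀ * dist x y ^ α)
      hopen hx hy hxy (by linarith) (by
        intro p hp r hr hr'
        have hrα : r ^ α ≤ dist x y ^ α := Real.rpow_le_rpow hr.le hr' hα0.le
        have he : C₀ * r ^ α ≤ C₀ * dist x y ^ α := mul_le_mul_of_nonneg_left hrα hC₀.le
        have he0 : 0 < C₀ * r ^ α := mul_pos hC₀ (Real.rpow_pos_of_pos hr _)
        have hm := hε p hp r hr (hr'.trans hsr)
        unfold carlesonEps at hm
        rw [one_div, inv_mul_le_iff₀ hr, mul_comm r, max_le_iff] at hm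
        exact ⟨he0, he, exists_arc hr he0 (by linarith) hm.1,
          exists_arc hr he0 (by linarith) hm.2⟩)
    refine ⟨_, hl, ?_, hl2.trans hxyρ, half_geom hC₀ hxy (hl1.trans_lt (by linarith))⟩
    rw [bisPt_dist]
    positivity
  choose! f hf1 hf2 hf3 hf4 using hhalf
  intro x₀ hx₀ s₀ hs₀ hs₀' y hy
  let z : ℕ → ℕ → E2 := fun k => Nat.rec (fun j => if j = 0 then x₀ else y)
    (fun _ w j => if Even j then w (j / 2) else f (w (j / 2)) (w (j / 2 + 1))) k
  have z0 : ∀ j, z 0 j = if j = 0 then x₀ else y := fun j => rfl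
  have zs : ∀ k j, z (k + 1) j =
      if Even j then z k (j / 2) else f (z k (j / 2)) (z k (j / 2 + 1)) := fun k j => rfl
  have ze : ∀ k i, z (k + 1) (2 * i) = z k i := by
    intro k i
    rw [zs, if_pos (even_two_mul i)]
    congr 1
    omega
  have zo : ∀ k i, z (k + 1) (2 * i + 1) = f (z k i) (z k (i + 1)) := by
    intro k i
    rw [zs, if_neg (by simp)]
    have : (2 * i + 1) / 2 = i := by omega
    rw [this]
  have inv : ∀ k, (∀ j ≤ 2 ^ k, z k j ∈ frontier Ωp) ∧
      (∀ j < 2 ^ k, 0 < dist (z k j) (z k (j + 1)) ∧ dist (z k j) (z k (j + 1)) ≤ ρ₀) := by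
    intro k
    induction k with
    | zero =>
      refine ⟨?_, ?_⟩
      · intro j _
        rw [z0]
        split_ifs
        · exact hx₀
        · exact hy.2
      · intro j hj
        have hj0 : j = 0 := by simpa using hj
        subst hj0
        rw [z0, z0]
        have := hy.1
        rw [mem_sphere, dist_comm] at this
        simp only [if_true, zero_add, one_ne_zero, if_false]
        rw [this]
        exact ⟨hs₀, hs₀'⟩
    | succ k ih =>
      obtain ⟨ih1, ih2⟩ := ih
      rw [pow_succ]
      refine ⟨?_, ?_⟩
      · intro j hj
        obtain ⟨i, hi | hi⟩ := Nat.even_or_odd' j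
        · subst hi
          rw [ze]
          exact ih1 i (by omega)
        · subst hi
          rw [zo]
          obtain ⟨d1, d2⟩ := ih2 i (by omega)
          exact hf1 _ _ (ih1 i (by omega)) (ih1 (i + 1) (by omega)) d1 d2
      · intro j hj
        obtain ⟨i, hi | hi⟩ := Nat.even_or_odd' j
        · subst hi
          rw [ze, zo]
          obtain ⟨d1, d2⟩ := ih2 i (by omega)
          exact ⟨hf2 _ _ (ih1 i (by omega)) (ih1 (i + 1) (by omega)) d1 d2,
            hf3 _ _ (ih1 i (by omega)) (ih1 (i + 1) (by omega)) d1 d2⟩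
        · subst hi
          have e1 : 2 * i + 1 + 1 = 2 * (i + 1) := by ring
          rw [e1, ze, zo]
          obtain ⟨d1, d2⟩ := ih2 i (by omega)
          have hc := (hf4 _ _ (ih1 i (by omega)) (ih1 (i + 1) (by omega)) d1 d2).1
          rw [dist_comm, ← hc]
          exact ⟨hf2 _ _ (ih1 i (by omega)) (ih1 (i + 1) (by omega)) d1 d2,
            hf3 _ _ (ih1 i (by omega)) (ih1 (i + 1) (by omega)) d1 d2⟩
  refine ⟨z, fun k => ⟨?_, ?_, (inv k).1, ?_, ?_⟩⟩
  · induction k with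
    | zero => rw [z0, if_pos rfl]
    | succ k ih => rw [← ih]; exact ze k 0
  · induction k with
    | zero => rw [z0, if_neg (by simp)]
    | succ k ih => rw [pow_succ, mul_comm, ze, ih]
  · intro j _ hj hk
    obtain ⟨k, rfl⟩ : ∃ m, k = m + 1 := ⟨k - 1, by omega⟩
    rw [zs, if_pos hj, Nat.add_sub_cancel]
  · intro j hj hjk
    obtain ⟨i, rfl⟩ := hj
    cases k with
    | zero => simp at hjk
    | succ k =>
      rw [pow_succ] at hjk
      have hi : i < 2 ^ k := by omega
      have e1 : 2 * i + 1 + 1 = 2 * (i + 1) := by ring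
      have e2 : 2 * i + 1 - 1 = 2 * i := by omega
      rw [e1, e2, ze, ze, zo]
      obtain ⟨d1, d2⟩ := (inv k).2 i hi
      exact hf4 _ _ ((inv k).1 i (by omega)) ((inv k).1 (i + 1) (by omega)) d1 d2

end
end
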